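/- Let Φ be a shift-invariant interaction on X = 𝒜^(ℤ^d): for each finite Λ ⊂ ℤ^d a continuous function Φ_Λ : X → ℝ such that Φ_Λ(x) = Φ_Λ(y) whenever x|_Λ = y|_Λ, and Φ_{Λ+n}(x) = Φ_Λ(σ^n x) for all finite Λ, all n ∈ ℤ^d and all x ∈ X. Assume absolute summability: Σ_{Λ finite, 0 ∈ Λ} ‖Φ_Λ‖_∞ < ∞. Then φ(x) = Σ_{Λ finite, 0 ∈ Λ} Φ_Λ(x)/|Λ| defines a continuous function φ : X → ℝ, and φ does not have a freezing phase transition at any β_c ∈ ℝ. -/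

import Mathlib

open MeasureTheory Filter Topology
open scoped ENNReal Classical

namespace Freezing

/-- The configuration space `X = 𝒜^(ℤ^d)`. -/
abbrev Cfg (d : ℕ) (A : Type) : Type := (Fin d → ℤ) → A

section Defs

variable {d : ℕ} {A : Type} [Fintype A] [TopologicalSpace A] [DiscreteTopology A]
  [MeasurableSpace A] [BorelSpace A]

/-- The shift action: `(σ^n x)_m = x_{n+m}`. -/
def shift (n : Fin d → ℤ) (x : Cfg d A) : Cfg d A := fun m => x (n + m)

/-- Shift-invariance of a measure. -/
def Invariant (μ : Measure (Cfg d A)) : Prop :=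
  ∀ n : Fin d → ℤ, Measure.map (shift n) μ = μ

/-- Cylinder set `[w]` for a pattern `w` on `E_n = ([0,n-1] ∩ ℤ)^d`. -/
def cylE (n : ℕ) (w : (Fin d → Fin n) → A) : Set (Cfg d A) :=
  { x | ∀ m : Fin d → Fin n, x (fun i => ((m i : ℕ) : ℤ)) = w m }

/-- Measure-theoretic entropy `h(μ) = inf_{n ≥ 1} n^{-d} Σ_w (-μ[w] log μ[w])`. -/
noncomputable def entropy (μ : Measure (Cfg d A)) : ℝ :=
  ⨅ n : {n : ℕ // 1 ≤ n},
    ((n.1 : ℝ) ^ d)⁻¹ *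
      ∑ w : (Fin d → Fin n.1) → A, Real.negMulLog (μ (cylE n.1 w)).toReal

/-- Pressure `p_φ(β) = sup { h(μ) + β ∫ φ dμ }` over shift-invariant probability measures. -/
noncomputable def pressure (φ : Cfg d A → ℝ) (β : ℝ) : ℝ :=
  sSup { r | ∃ μ : Measure (Cfg d A), IsProbabilityMeasure μ ∧ Invariant μ ∧
    r = entropy μ + β * ∫ x, φ x ∂μ }

/-- The set of equilibrium states of `βφ`. -/
def ES (φ : Cfg d A → ℝ) (β : ℝ) : Set (Measure (Cfg d A)) :=
  { μ | IsProbabilityMeasure μ ∧ Invariant μ ∧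
      entropy μ + β * ∫ x, φ x ∂μ = pressure φ β }

/-- `φ` has a freezing phase transition at `βc`. -/
def FreezingPT (φ : Cfg d A → ℝ) (βc : ℝ) : Prop :=
  (∀ β β' : ℝ, βc < β → βc < β' → ES φ β = ES φ β') ∧
  (∀ β β' : ℝ, β < βc → βc < β' → ES φ β ≠ ES φ β')

/-- `s_φ = sup { ∫ φ dμ }` over shift-invariant probability measures. -/
noncomputable def sPhi (φ : Cfg d A → ℝ) : ℝ :=
  sSup { r | ∃ μ : Measure (Cfg d A), IsProbabilityMeasure μ ∧ Invariant μ ∧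
    r = ∫ x, φ x ∂μ }

/-- The set of maximizing measures of `φ`. -/
def MM (φ : Cfg d A → ℝ) : Set (Measure (Cfg d A)) :=
  { μ | IsProbabilityMeasure μ ∧ Invariant μ ∧ (∫ x, φ x ∂μ) = sPhi φ }

/-- `h_φ = sup { h(η) : η ∈ MM(φ) }`. -/
noncomputable def hPhi (φ : Cfg d A → ℝ) : ℝ :=
  sSup { r | ∃ μ ∈ MM φ, r = entropy μ }

/-- The zero-temperature accumulation points of `φ`. -/
def ZTA (φ : Cfg d A → ℝ) : Set (Measure (Cfg d A)) :=
  { μ | IsProbabilityMeasure μ ∧ Invariant μ ∧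
      ∃ (β : ℕ → ℝ) (μs : ℕ → Measure (Cfg d A)),
        Tendsto β atTop atTop ∧ (∀ k, μs k ∈ ES φ (β k)) ∧
        ∀ f : Cfg d A → ℝ, Continuous f →
          Tendsto (fun k => ∫ x, f x ∂(μs k)) atTop (𝓝 (∫ x, f x ∂μ)) }

/-- A subshift: nonempty, closed, invariant under every shift. -/
def IsSubshift (X₀ : Set (Cfg d A)) : Prop :=
  X₀.Nonempty ∧ IsClosed X₀ ∧ ∀ n : Fin d → ℤ, ∀ x ∈ X₀, shift n x ∈ X₀

/-- The language `L_{E_n}(X₀)`: patterns on `E_n` appearing at the origin of points of `X₀`. -/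
def langE (X₀ : Set (Cfg d A)) (n : ℕ) : Set ((Fin d → Fin n) → A) :=
  { w | ∃ x ∈ X₀, ∀ m : Fin d → Fin n, x (fun i => ((m i : ℕ) : ℤ)) = w m }

/-- Topological entropy `h_top(X₀) = inf_{n ≥ 1} n^{-d} log |L_{E_n}(X₀)|`. -/
noncomputable def topEnt (X₀ : Set (Cfg d A)) : ℝ :=
  ⨅ n : {n : ℕ // 1 ≤ n}, ((n.1 : ℝ) ^ d)⁻¹ * Real.log ((langE X₀ n.1).ncard)

/-- A measure of maximal entropy on the subshift `X₀`. -/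
def IsMME (X₀ : Set (Cfg d A)) (μ : Measure (Cfg d A)) : Prop :=
  IsProbabilityMeasure μ ∧ Invariant μ ∧ μ X₀ = 1 ∧ entropy μ = topEnt X₀

/-- Ergodicity: invariant Borel sets have measure `0` or `1`. -/
def ErgodicInv (μ : Measure (Cfg d A)) : Prop :=
  ∀ s : Set (Cfg d A), MeasurableSet s → (∀ n : Fin d → ℤ, shift n ⁻¹' s = s) →
    μ s = 0 ∨ μ s = 1

/-- The `n`-th variation `var_n φ`, over pairs agreeing on `B_n = ([-n,n] ∩ ℤ)^d`. -/
noncomputable def varPot (φ : Cfg d A → ℝ) (n : ℕ) : ℝ :=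
  sSup { r | ∃ x y : Cfg d A,
    (∀ m : Fin d → ℤ, (∀ i, |m i| ≤ (n : ℤ)) → x m = y m) ∧ r = |φ x - φ y| }

/-- Sup-norm `‖m‖_∞` of a site `m ∈ ℤ^d`. -/
def supNorm (m : Fin d → ℤ) : ℕ := Finset.univ.sup fun i => (m i).natAbs

/-- The metric `dist(x,y) = 2^{-min{‖n‖_∞ : x_n ≠ y_n}}`. -/
noncomputable def cfgDist (x y : Cfg d A) : ℝ :=
  if x = y then 0
  else (2 : ℝ) ^
    (-((sInf { k : ℕ | ∃ m : Fin d → ℤ, supNorm m = k ∧ x m ≠ y m } : ℕ) : ℤ))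

/-- Distance from a point to a subshift. -/
noncomputable def distToSub (X₀ : Set (Cfg d A)) (x : Cfg d A) : ℝ :=
  sInf { r | ∃ y ∈ X₀, r = cfgDist x y }

end Defs


section Interaction

variable {d : ℕ} {A : Type} [Fintype A] [TopologicalSpace A] [DiscreteTopology A]
  [MeasurableSpace A] [BorelSpace A]

/-- The potential associated to an interaction: `φ = Σ_{Λ ∋ 0} Φ_Λ / |Λ|`. -/
noncomputable def potentialOfInteraction (Φ : Finset (Fin d → ℤ) → Cfg d A → ℝ)
    (x : Cfg d A) : ℝ :=
  ∑' Λ : {Λ : Finset (Fin d → ℤ) // (0 : Fin d → ℤ) ∈ Λ}, Φ Λ.1 x / (Λ.1.card : ℝ)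

end Interaction


lemma gibbs_ineq {ι : Type*} [Fintype ι] (p a : ι → ℝ) (hp : ∀ i, 0 ≤ p i)
    (hs : ∑ i, p i = 1) :
    ∑ i, p i * a i + ∑ i, Real.negMulLog (p i) ≤ Real.log (∑ i, Real.exp (a i)) := by
  have hne : Nonempty ι := by
    by_contra h
    rw [not_nonempty_iff] at h
    simp at hs
  set Z := ∑ i, Real.exp (a i) with hZ
  have hZpos : 0 < Z := Finset.sum_pos (fun i _ => Real.exp_pos _) Finset.univ_nonempty
  have key : ∀ i, p i * a i + Real.negMulLog (p i) ≤
      p i * Real.log Z + Real.exp (a i) / Z - p i := by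
    intro i
    rcases (hp i).eq_or_lt with h | h
    · rw [← h]; simp; positivity
    · have h1 := Real.log_le_sub_one_of_pos (x := Real.exp (a i) / (p i * Z)) (by positivity)
      rw [Real.log_div (by positivity) (by positivity), Real.log_exp,
        Real.log_mul h.ne' hZpos.ne'] at h1
      have h2 := mul_le_mul_of_nonneg_left h1 h.le
      have h3 : p i * (Real.exp (a i) / (p i * Z) - 1) = Real.exp (a i) / Z - p i := by
        field_simp
      rw [h3] at h2
      unfold Real.negMulLog
      linarith
  rw [← Finset.sum_add_distrib]
  calc _ ≤ ∑ i, (p i * Real.log Z + Real.exp (a i) / Z - p i) := Finset.sum_le_sum fun i _ => key i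
    _ = Real.log Z := by
      rw [Finset.sum_sub_distrib, Finset.sum_add_distrib, ← Finset.sum_mul, hs,
        ← Finset.sum_div, ← hZ, div_self hZpos.ne']
      ring

lemma gibbs_eq {ι : Type*} [Fintype ι] [Nonempty ι] (a : ι → ℝ) :
    ∑ i, (Real.exp (a i) / ∑ j, Real.exp (a j)) * a i +
      ∑ i, Real.negMulLog (Real.exp (a i) / ∑ j, Real.exp (a j)) =
      Real.log (∑ i, Real.exp (a i)) := by
  set Z := ∑ i, Real.exp (a i) with hZ
  have hZpos : 0 < Z := Finset.sum_pos (fun i _ => Real.exp_pos _) Finset.univ_nonempty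
  rw [← Finset.sum_add_distrib]
  have : ∀ i, Real.exp (a i) / Z * a i + Real.negMulLog (Real.exp (a i) / Z) =
      Real.exp (a i) / Z * Real.log Z := by
    intro i
    unfold Real.negMulLog
    rw [Real.log_div (by positivity) (by positivity), Real.log_exp]
    ring
  simp_rw [this]
  rw [← Finset.sum_mul, ← Finset.sum_div, ← hZ, div_self hZpos.ne', one_mul]

lemma two_point (V : Type*) [Fintype V] (b C δ : ℝ) (hb : 1 ≤ b) (hδ : 0 < δ) :
    ∃ κ : ℝ, 0 < κ ∧ ∀ (h : V → ℝ) (u v : V), (∀ w, |h w| ≤ C) → δ ≤ |h u - h v| →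
      (1 + κ) * (∑ w, Real.exp (b * h w)) ^ 2 ≤
        (∑ w, Real.exp ((b - 1) * h w)) * (∑ w, Real.exp ((b + 1) * h w)) := by
  rcases isEmpty_or_nonempty V with hV | hV
  · exact ⟨1, one_pos, fun h u => (hV.false u).elim⟩
  have hK : (0 : ℝ) < Fintype.card V := by exact_mod_cast Fintype.card_pos
  set κ := Real.exp (-((b - 1) * C)) ^ 2 * (Real.exp (-C) * δ) ^ 2 /
    ((Fintype.card V : ℝ) * Real.exp (b * C)) ^ 2 with hκ
  refine ⟨κ, by positivity, ?_⟩
  intro h u v hC huv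
  wlog huv' : h v ≤ h u generalizing u v
  · exact this v u (by rwa [abs_sub_comm]) (le_of_not_ge huv')
  rw [abs_of_nonneg (by linarith)] at huv
  set a : V → ℝ := fun w => Real.exp ((b - 1) * h w) with ha
  set r : V → ℝ := fun w => Real.exp (h w) with hr
  have e1 : ∀ w, Real.exp (b * h w) = a w * r w := by
    intro w; simp only [ha, hr, ← Real.exp_add]; congr 1; ring
  have e2 : ∀ w, Real.exp ((b + 1) * h w) = a w * r w ^ 2 := by
    intro w; simp only [ha, hr, ← Real.exp_add, sq]; congr 1; ring
  have hapos : ∀ w, 0 < a w := fun w => Real.exp_pos _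
  -- variance identity
  have hvar : 2 * ((∑ w, a w) * (∑ w, a w * r w ^ 2) - (∑ w, a w * r w) ^ 2) =
      ∑ x, ∑ y, a x * a y * (r x - r y) ^ 2 := by
    have : ∀ x y, a x * a y * (r x - r y) ^ 2 =
        (a x * r x ^ 2) * a y + a x * (a y * r y ^ 2) - 2 * ((a x * r x) * (a y * r y)) := by
      intros; ring
    simp_rw [this, Finset.sum_sub_distrib, Finset.sum_add_distrib, ← Finset.mul_sum,
      ← Finset.sum_mul]
    ring
  have huvne : u ≠ v := by rintro rfl; linarith
  have hlow : 2 * (a u * a v * (r u - r v) ^ 2) ≤ ∑ x, ∑ y, a x * a y * (r x - r y) ^ 2 := by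
    have hnn : ∀ x y, 0 ≤ a x * a y * (r x - r y) ^ 2 := fun x y =>
      mul_nonneg (mul_nonneg (hapos x).le (hapos y).le) (sq_nonneg _)
    have h1 : ∑ x ∈ {u, v}, ∑ y, a x * a y * (r x - r y) ^ 2 ≤
        ∑ x, ∑ y, a x * a y * (r x - r y) ^ 2 :=
      Finset.sum_le_sum_of_subset_of_nonneg (Finset.subset_univ _)
        (fun x _ _ => Finset.sum_nonneg fun y _ => hnn x y)
    rw [Finset.sum_pair huvne] at h1
    have h2 := Finset.single_le_sum (f := fun y => a u * a y * (r u - r y) ^ 2)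
      (fun y _ => hnn u y) (Finset.mem_univ v)
    have h3 := Finset.single_le_sum (f := fun y => a v * a y * (r v - r y) ^ 2)
      (fun y _ => hnn v y) (Finset.mem_univ u)
    have h4 : a v * a u * (r v - r u) ^ 2 = a u * a v * (r u - r v) ^ 2 := by ring
    linarith
  have halow : ∀ w, Real.exp (-((b - 1) * C)) ≤ a w := by
    intro w
    apply Real.exp_le_exp.2
    have := (abs_le.1 (hC w)).1
    nlinarith
  have hrlow : Real.exp (-C) * δ ≤ r u - r v := by
    have h1 : r u = r v * Real.exp (h u - h v) := by
      simp only [hr, ← Real.exp_add]; congr 1; ring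
    have h2 := Real.add_one_le_exp (h u - h v)
    have h3 : Real.exp (-C) ≤ r v := Real.exp_le_exp.2 (abs_le.1 (hC v)).1
    have h4 : 0 < r v := Real.exp_pos _
    rw [h1]
    calc Real.exp (-C) * δ ≤ r v * δ := by gcongr
      _ ≤ r v * (Real.exp (h u - h v) - 1) := by gcongr; linarith
      _ = _ := by ring
  have hup : (∑ w, a w * r w) ≤ (Fintype.card V : ℝ) * Real.exp (b * C) := by
    simp_rw [← e1]
    calc _ ≤ ∑ w : V, Real.exp (b * C) := by
          refine Finset.sum_le_sum fun w _ => Real.exp_le_exp.2 ?_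
          have := (abs_le.1 (hC w)).2
          nlinarith
      _ = _ := by simp
  have hS0 : 0 ≤ ∑ w, a w * r w :=
    Finset.sum_nonneg fun w _ => mul_nonneg (hapos w).le (Real.exp_pos _).le
  have hκle : κ * (∑ w, a w * r w) ^ 2 ≤ a u * a v * (r u - r v) ^ 2 := by
    calc κ * (∑ w, a w * r w) ^ 2 ≤ κ * ((Fintype.card V : ℝ) * Real.exp (b * C)) ^ 2 := by
          gcongr
      _ = Real.exp (-((b - 1) * C)) * Real.exp (-((b - 1) * C)) * (Real.exp (-C) * δ) ^ 2 := by
          rw [hκ]; field_simp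
      _ ≤ a u * a v * (r u - r v) ^ 2 := by
          gcongr
          · exact halow u
          · exact halow v
  simp_rw [e1, e2]
  change (1 + κ) * _ ≤ (∑ w, a w) * _
  linarith

lemma prod_approx {I V : Type*} [Fintype I] (H : (I → V) → ℝ) (a : V) (ε : ℝ)
    (hcross : ∀ (i : I) (u : V) (ω ω' : I → V),
      |(H (Function.update ω i u) - H (Function.update ω i a)) -
        (H (Function.update ω' i u) - H (Function.update ω' i a))| ≤ ε) (ω : I → V) :
    |H ω - H (fun _ => a) -
      ∑ i, (H (Function.update (fun _ => a) i (ω i)) - H (fun _ => a))| ≤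
      Fintype.card I * ε := by
  have key : ∀ J : Finset I, |H (fun i => if i ∈ J then ω i else a) - H (fun _ => a) -
      ∑ i ∈ J, (H (Function.update (fun _ => a) i (ω i)) - H (fun _ => a))| ≤ J.card * ε := by
    intro J
    induction J using Finset.induction_on with
    | empty => simp
    | insert i J hi ih =>
      have e1 : (fun k => if k ∈ insert i J then ω k else a) =
          Function.update (fun k => if k ∈ J then ω k else a) i (ω i) := by
        funext k
        by_cases hk : k = i
        · subst hk; simp
        · simp [hk]
      have e2 : (fun k => if k ∈ J then ω k else a) =
          Function.update (fun k => if k ∈ J then ω k else a) i a := by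
        funext k
        by_cases hk : k = i
        · subst hk; simp [hi]
        · simp [hk]
      have e3 : (fun _ : I => a) = Function.update (fun _ => a) i a := by simp
      have := hcross i (ω i) (fun k => if k ∈ J then ω k else a) (fun _ => a)
      rw [← e1, ← e2, ← e3] at this
      rw [Finset.sum_insert hi, Finset.card_insert_of_notMem hi]
      push_cast
      rw [abs_le] at *
      constructor <;> linarith [this.1, this.2, ih.1, ih.2]
  simpa using key Finset.univ

lemma sum_exp_prod {I V : Type*} [Fintype I] [Fintype V] (β : ℝ) (h : I → V → ℝ) :
    ∑ ω : I → V, Real.exp (β * ∑ i, h i (ω i)) = ∏ i, ∑ u, Real.exp (β * h i u) := by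
  rw [Finset.prod_univ_sum]
  simp only [Fintype.piFinset_univ]
  refine Finset.sum_congr rfl fun ω _ => ?_
  rw [Finset.mul_sum, Real.exp_sum]

lemma sc_fiber {I V : Type*} [Fintype I] [Fintype V] (H : (I → V) → ℝ) (b C δ ε κ : ℝ)
    (a : V) (hb : 1 ≤ b) (hκ : 0 < κ)
    (hκ2 : ∀ (h : V → ℝ) (u v : V), (∀ w, |h w| ≤ C) → δ ≤ |h u - h v| →
      (1 + κ) * (∑ w, Real.exp (b * h w)) ^ 2 ≤
        (∑ w, Real.exp ((b - 1) * h w)) * (∑ w, Real.exp ((b + 1) * h w)))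
    (hcross : ∀ (i : I) (u : V) (ω ω' : I → V),
      |(H (Function.update ω i u) - H (Function.update ω i a)) -
        (H (Function.update ω' i u) - H (Function.update ω' i a))| ≤ ε)
    (hC : ∀ (i : I) (u : V) (ω : I → V), |H (Function.update ω i u) - H (Function.update ω i a)| ≤ C)
    (u v : V) (hδ : ∀ (i : I) (ω : I → V), δ ≤ |H (Function.update ω i u) - H (Function.update ω i v)|) :
    ((1 + κ) * Real.exp (-(4 * b * ε))) ^ Fintype.card I * (∑ ω, Real.exp (b * H ω)) ^ 2 ≤
      (∑ ω, Real.exp ((b - 1) * H ω)) * (∑ ω, Real.exp ((b + 1) * H ω)) := by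
  set h : I → V → ℝ := fun i w => H (Function.update (fun _ => a) i w) - H (fun _ => a) with hh
  set M : ℝ := (Fintype.card I : ℝ) with hM
  set c := H (fun _ => a) with hc
  have happ := prod_approx H a ε hcross
  have hz : ∀ i, (1 + κ) * (∑ w, Real.exp (b * h i w)) ^ 2 ≤
        (∑ w, Real.exp ((b - 1) * h i w)) * (∑ w, Real.exp ((b + 1) * h i w)) := by
    intro i
    apply hκ2 (h i) u v
    · intro w
      have := hC i w (fun _ => a)
      simpa [hh] using this
    · have := hδ i (fun _ => a)
      simpa [hh] using this
  have hprod : (1 + κ) ^ Fintype.card I * (∏ i, ∑ w, Real.exp (b * h i w)) ^ 2 ≤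
      (∏ i, ∑ w, Real.exp ((b - 1) * h i w)) * ∏ i, ∑ w, Real.exp ((b + 1) * h i w) := by
    rw [← Finset.prod_mul_distrib, ← Finset.prod_pow]
    have : (1 + κ) ^ Fintype.card I = ∏ _i : I, (1 + κ) := by simp
    rw [this, ← Finset.prod_mul_distrib]
    exact Finset.prod_le_prod (fun i _ => by positivity) (fun i _ => hz i)
  have hupper : ∀ β, 0 ≤ β → ∑ ω, Real.exp (β * H ω) ≤
      Real.exp (β * (c + M * ε)) * ∏ i, ∑ w, Real.exp (β * h i w) := by
    intro β hβ
    rw [← sum_exp_prod, Finset.mul_sum]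
    refine Finset.sum_le_sum fun ω _ => ?_
    rw [← Real.exp_add]
    apply Real.exp_le_exp.2
    have := (abs_le.1 (happ ω)).2
    have h2 : H ω ≤ c + M * ε + ∑ i, h i (ω i) := by simp only [hh]; linarith
    nlinarith
  have hlower : ∀ β, 0 ≤ β → Real.exp (β * (c - M * ε)) * ∏ i, ∑ w, Real.exp (β * h i w) ≤
      ∑ ω, Real.exp (β * H ω) := by
    intro β hβ
    rw [← sum_exp_prod, Finset.mul_sum]
    refine Finset.sum_le_sum fun ω _ => ?_
    rw [← Real.exp_add]
    apply Real.exp_le_exp.2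
    have := (abs_le.1 (happ ω)).1
    have h2 : c - M * ε + ∑ i, h i (ω i) ≤ H ω := by simp only [hh]; linarith
    nlinarith
  have hE : Real.exp (-(4 * b * ε)) ^ Fintype.card I = Real.exp (M * (-(4 * b * ε))) := by
    rw [hM, Real.exp_nat_mul]
  have hP : ∀ β, 0 ≤ ∏ i, ∑ w, Real.exp (β * h i w) := fun β => by positivity
  calc _ ≤ ((1 + κ) * Real.exp (-(4 * b * ε))) ^ Fintype.card I *
        (Real.exp (b * (c + M * ε)) * ∏ i, ∑ w, Real.exp (b * h i w)) ^ 2 := by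
        gcongr
        exact hupper b (by linarith)
    _ = (Real.exp (M * (-(4 * b * ε))) * Real.exp (b * (c + M * ε)) ^ 2) *
        ((1 + κ) ^ Fintype.card I * (∏ i, ∑ w, Real.exp (b * h i w)) ^ 2) := by
        rw [mul_pow, hE]; ring
    _ = (Real.exp ((b - 1) * (c - M * ε)) * Real.exp ((b + 1) * (c - M * ε))) *
        ((1 + κ) ^ Fintype.card I * (∏ i, ∑ w, Real.exp (b * h i w)) ^ 2) := by
        rw [sq, ← Real.exp_add, ← Real.exp_add, ← Real.exp_add]
        congr 2; ring
    _ ≤ (Real.exp ((b - 1) * (c - M * ε)) * Real.exp ((b + 1) * (c - M * ε))) *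
      ((∏ i, ∑ w, Real.exp ((b - 1) * h i w)) * ∏ i, ∑ w, Real.exp ((b + 1) * h i w)) := by
        gcongr
    _ = (Real.exp ((b - 1) * (c - M * ε)) * (∏ i, ∑ w, Real.exp ((b - 1) * h i w))) *
      (Real.exp ((b + 1) * (c - M * ε)) * ∏ i, ∑ w, Real.exp ((b + 1) * h i w)) := by ring
    _ ≤ _ := mul_le_mul (hlower _ (by linarith)) (hlower _ (by linarith))
        (mul_nonneg (Real.exp_pos _).le (hP _)) (by positivity)

/-- merging a background with box patterns -/
noncomputable def merge {T I F A : Type*} (g : I × F → T) (η : {t // t ∉ Set.range g} → A)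
    (ω : I → F → A) (t : T) : A :=
  if h : t ∈ Set.range g then ω h.choose.1 h.choose.2 else η ⟨t, h⟩

lemma merge_box {T I F A : Type*} (g : I × F → T) (hg : Function.Injective g)
    (η : {t // t ∉ Set.range g} → A) (ω : I → F → A) (i : I) (f : F) :
    merge g η ω (g (i, f)) = ω i f := by
  have h : g (i, f) ∈ Set.range g := ⟨_, rfl⟩
  have := hg h.choose_spec
  simp only [merge, h, dif_pos]
  rw [this]

lemma merge_off {T I F A : Type*} (g : I × F → T)
    (η : {t // t ∉ Set.range g} → A) (ω : I → F → A) (t : T) (ht : t ∉ Set.range g) :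
    merge g η ω t = η ⟨t, ht⟩ := by
  simp only [merge, ht, dif_neg, not_false_eq_true]

lemma sum_merge {T I F A : Type*} [Fintype T] [Fintype I] [Fintype F] [Fintype A]
    (g : I × F → T) (hg : Function.Injective g) (G : (T → A) → ℝ) :
    ∑ w, G w = ∑ η : {t // t ∉ Set.range g} → A, ∑ ω : I → F → A, G (merge g η ω) := by
  rw [← Fintype.sum_prod_type' (f := fun η ω => G (merge g η ω))]
  symm
  refine Fintype.sum_bijective (fun p : ({t // t ∉ Set.range g} → A) × (I → F → A) =>
    merge g p.1 p.2) ⟨?_, ?_⟩ _ _ (fun _ => rfl)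
  · rintro ⟨η, ω⟩ ⟨η', ω'⟩ h
    simp only at h
    refine Prod.ext ?_ ?_
    · funext ⟨t, ht⟩
      have := congrFun h t
      rwa [merge_off _ _ _ _ ht, merge_off _ _ _ _ ht] at this
    · funext i f
      have := congrFun h (g (i, f))
      rwa [merge_box _ hg, merge_box _ hg] at this
  · intro w
    refine ⟨⟨fun t => w t, fun i f => w (g (i, f))⟩, ?_⟩
    funext t
    by_cases ht : t ∈ Set.range g
    · obtain ⟨⟨i, f⟩, rfl⟩ := ht
      simp only
      rw [merge_box _ hg]
    · simp only
      rw [merge_off _ _ _ _ ht]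

lemma sc_total {T I F A : Type*} [Fintype T] [Fintype I] [Fintype F] [Fintype A]
    (g : I × F → T) (hg : Function.Injective g) (S : (T → A) → ℝ) (b C δ ε κ : ℝ)
    (a : F → A) (hb : 1 ≤ b) (hκ : 0 < κ)
    (hκ2 : ∀ (h : (F → A) → ℝ) (u v : F → A), (∀ w, |h w| ≤ C) → δ ≤ |h u - h v| →
      (1 + κ) * (∑ w, Real.exp (b * h w)) ^ 2 ≤
        (∑ w, Real.exp ((b - 1) * h w)) * (∑ w, Real.exp ((b + 1) * h w)))
    (hcross : ∀ (η : {t // t ∉ Set.range g} → A) (i : I) (u : F → A) (ω ω' : I → F → A),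
      |(S (merge g η (Function.update ω i u)) - S (merge g η (Function.update ω i a))) -
        (S (merge g η (Function.update ω' i u)) - S (merge g η (Function.update ω' i a)))| ≤ ε)
    (hC : ∀ (η : {t // t ∉ Set.range g} → A) (i : I) (u : F → A) (ω : I → F → A),
      |S (merge g η (Function.update ω i u)) - S (merge g η (Function.update ω i a))| ≤ C)
    (u v : F → A) (hδ : ∀ (η : {t // t ∉ Set.range g} → A) (i : I) (ω : I → F → A),
      δ ≤ |S (merge g η (Function.update ω i u)) - S (merge g η (Function.update ω i v))|) :
    ((1 + κ) * Real.exp (-(4 * b * ε))) ^ Fintype.card I * (∑ w, Real.exp (b * S w)) ^ 2 ≤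
      (∑ w, Real.exp ((b - 1) * S w)) * (∑ w, Real.exp ((b + 1) * S w)) := by
  rw [sum_merge g hg (fun w => Real.exp (b * S w)),
    sum_merge g hg (fun w => Real.exp ((b - 1) * S w)),
    sum_merge g hg (fun w => Real.exp ((b + 1) * S w))]
  set D := ((1 + κ) * Real.exp (-(4 * b * ε))) ^ Fintype.card I with hD
  have hD0 : 0 ≤ D := by positivity
  have := Finset.sum_sq_le_sum_mul_sum_of_sq_le_mul
    (Finset.univ : Finset ({t // t ∉ Set.range g} → A))
    (r := fun η => √D * ∑ ω : I → F → A, Real.exp (b * S (merge g η ω)))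
    (f := fun η => ∑ ω : I → F → A, Real.exp ((b - 1) * S (merge g η ω)))
    (g := fun η => ∑ ω : I → F → A, Real.exp ((b + 1) * S (merge g η ω)))
    (fun _ _ => by positivity) (fun _ _ => by positivity)
    (fun η _ => by
      rw [mul_pow, Real.sq_sqrt hD0]
      exact sc_fiber (fun ω => S (merge g η ω)) b C δ ε κ a hb hκ hκ2 (hcross η) (hC η) u v (hδ η))
  rwa [← Finset.mul_sum, mul_pow, Real.sq_sqrt hD0] at this



section Torus
variable {d : ℕ} {A : Type}

/-- The discrete torus. -/
abbrev Tor (d N : ℕ) : Type := Fin d → ZMod N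

/-- Projection to the torus. -/
def castT (N : ℕ) (m : Fin d → ℤ) : Tor d N := fun i => (m i : ZMod N)

/-- Periodic extension. -/
def per {N : ℕ} (w : Tor d N → A) : Cfg d A := fun m => w (castT N m)

/-- Translation on the torus. -/
def trans {N : ℕ} (t : Tor d N) (w : Tor d N → A) : Tor d N → A := fun u => w (t + u)

lemma castT_add (N : ℕ) (m n : Fin d → ℤ) : castT N (m + n) = castT N m + castT N n := by
  funext i; simp [castT]

lemma shift_per {N : ℕ} (n : Fin d → ℤ) (w : Tor d N → A) :
    shift n (per w) = per (trans (castT N n) w) := by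
  funext m; simp [shift, per, trans, castT_add]

lemma trans_trans {N : ℕ} (s t : Tor d N) (w : Tor d N → A) :
    trans s (trans t w) = trans (t + s) w := by
  funext u; simp [trans, add_assoc]

/-- Torus energy. -/
noncomputable def SS {N : ℕ} [NeZero N] (f : Cfg d A → ℝ) (w : Tor d N → A) : ℝ :=
  ∑ t : Tor d N, f (per (trans t w))

/-- Finite volume pressure. -/
noncomputable def PN [Fintype A] (N : ℕ) [NeZero N] (f : Cfg d A → ℝ) : ℝ :=
  ((N : ℝ) ^ d)⁻¹ * Real.log (∑ w : Tor d N → A, Real.exp (SS f w))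

/-- Integer box. -/
noncomputable def box (d : ℕ) (a b : ℤ) : Finset (Fin d → ℤ) := Fintype.piFinset fun _ => Finset.Ico a b

lemma mem_box {a b : ℤ} {m : Fin d → ℤ} : m ∈ box d a b ↔ ∀ i, a ≤ m i ∧ m i < b := by
  simp [box]

lemma card_box (a b : ℤ) : (box d a b).card = (b - a).toNat ^ d := by
  simp [box]

lemma castT_injOn (N : ℕ) : Set.InjOn (castT (d := d) N) (box d 0 N) := by
  intro m hm m' hm' h
  rw [Finset.mem_coe, mem_box] at hm hm'
  funext i
  have h1 := congrFun h i
  simp only [castT] at h1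
  rw [ZMod.intCast_eq_intCast_iff'] at h1
  rwa [Int.emod_eq_of_lt (hm i).1 (hm i).2, Int.emod_eq_of_lt (hm' i).1 (hm' i).2] at h1

lemma card_Tor (N : ℕ) [NeZero N] : Fintype.card (Tor d N) = N ^ d := by
  simp [ZMod.card]

lemma image_castT (N : ℕ) [NeZero N] : (box d 0 N).image (castT N) = Finset.univ := by
  apply Finset.eq_univ_of_card
  rw [Finset.card_image_of_injOn (castT_injOn N), card_box, card_Tor]
  simp

lemma sum_Tor {M : Type*} [AddCommMonoid M] (N : ℕ) [NeZero N] (F : Tor d N → M) :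
    ∑ t, F t = ∑ m ∈ box d 0 N, F (castT N m) := by
  rw [← image_castT N, Finset.sum_image (castT_injOn N)]

/-- Box sums. -/
noncomputable def boxSum (f : Cfg d A → ℝ) (k : ℕ) (x : Cfg d A) : ℝ :=
  ∑ m ∈ box d 0 k, f (shift m x)

lemma SS_eq_boxSum {N : ℕ} [NeZero N] (f : Cfg d A → ℝ) (w : Tor d N → A) :
    SS f w = boxSum f N (per w) := by
  rw [SS, sum_Tor, boxSum]
  refine Finset.sum_congr rfl fun m _ => ?_
  rw [shift_per]

/-- Inclusion of the cube pattern indices. -/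
def emb {k : ℕ} (m : Fin d → Fin k) : Fin d → ℤ := fun i => ((m i : ℕ) : ℤ)

/-- Restriction to `E_n`. -/
def resE (n : ℕ) (x : Cfg d A) : (Fin d → Fin n) → A := fun m => x (emb m)

lemma cylE_eq (n : ℕ) (w : (Fin d → Fin n) → A) : cylE n w = resE n ⁻¹' {w} := by
  ext x
  simp only [cylE, Set.mem_ofPred_eq, Set.mem_preimage, Set.mem_singleton_iff]
  constructor
  · intro h; funext m; exact h m
  · intro h m; exact congrFun h m

lemma resE_eq_iff (n : ℕ) (x y : Cfg d A) :
    resE n x = resE n y ↔ ∀ m ∈ box d 0 n, x m = y m := by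
  constructor
  · intro h m hm
    rw [mem_box] at hm
    have := congrFun h (fun i => ⟨(m i).toNat, by have := hm i; omega⟩)
    simp only [resE] at this
    have e : emb (fun i => (⟨(m i).toNat, by have := hm i; omega⟩ : Fin n)) = m := by
      funext i; simp only [emb]; have := hm i; omega
    rwa [e] at this
  · intro h
    funext m
    apply h
    rw [mem_box]
    intro i
    simp [emb]

lemma box_inj (L M k N : ℕ) (hkL : k ≤ L) (hN : N = M * L) :
    Function.Injective (fun p : (Fin d → Fin M) × (Fin d → Fin k) =>
      castT N (fun i => (L : ℤ) * (p.1 i : ℕ) + ((p.2 i : ℕ) : ℤ))) := by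
  rintro ⟨j, m⟩ ⟨j', m'⟩ h
  have hb : ∀ (j : Fin d → Fin M) (m : Fin d → Fin k),
      (fun i => (L : ℤ) * (j i : ℕ) + ((m i : ℕ) : ℤ)) ∈ box d 0 N := by
    intro j m
    rw [mem_box]
    intro i
    have h1 := (j i).2
    have h2 := (m i).2
    refine ⟨by positivity, ?_⟩
    have : L * (j i : ℕ) + (m i : ℕ) < N := by
      calc L * (j i : ℕ) + (m i : ℕ) < L * (j i : ℕ) + L := by omega
        _ = ((j i : ℕ) + 1) * L := by ring
        _ ≤ M * L := Nat.mul_le_mul_right _ h1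
        _ = N := hN.symm
    exact_mod_cast this
  have h1 := castT_injOn N (hb j m) (hb j' m') h
  have key : ∀ i, (j i : ℕ) = j' i ∧ (m i : ℕ) = m' i := by
    intro i
    have h2 := congrFun h1 i
    have h3 : L * (j i : ℕ) + (m i : ℕ) = L * (j' i : ℕ) + (m' i : ℕ) := by exact_mod_cast h2
    have hm := (m i).2
    have hm' := (m' i).2
    have hL : 0 < L := by omega
    have e1 : (L * (j i : ℕ) + (m i : ℕ)) / L = j i := by
      rw [Nat.mul_add_div hL, Nat.div_eq_of_lt (by omega)]; simp
    have e2 : (L * (j' i : ℕ) + (m' i : ℕ)) / L = j' i := by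
      rw [Nat.mul_add_div hL, Nat.div_eq_of_lt (by omega)]; simp
    have e3 : (j i : ℕ) = j' i := by rw [← e1, ← e2, h3]
    rw [e3] at h3
    exact ⟨e3, by omega⟩
  refine Prod.ext ?_ ?_
  · funext i; exact Fin.ext (key i).1
  · funext i; exact Fin.ext (key i).2

lemma sum_blocks [Fintype A] (M n N : ℕ) [NeZero N] (hN : N = M * n)
    (q : ((Fin d → Fin n) → A) → ℝ) (hq1 : ∑ v, q v = 1) (s : Tor d N) :
    ∑ w : Tor d N → A, ∏ j : Fin d → Fin M,
      q (resE n (per (trans (s + castT N (fun i => (n : ℤ) * (j i : ℕ))) w))) = 1 := by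
  have hinj := box_inj (d := d) n M n N le_rfl hN
  have hbij : Function.Bijective (fun p : (Fin d → Fin M) × (Fin d → Fin n) =>
      s + castT N (fun i => (n : ℤ) * (p.1 i : ℕ) + ((p.2 i : ℕ) : ℤ))) := by
    rw [Fintype.bijective_iff_injective_and_card]
    refine ⟨fun p p' h => hinj (add_left_cancel h), ?_⟩
    rw [card_Tor, Fintype.card_prod]
    simp [hN, mul_pow]
  let e := Equiv.ofBijective _ hbij
  let E : (Tor d N → A) ≃ ((Fin d → Fin M) → (Fin d → Fin n) → A) :=
    (Equiv.arrowCongr e.symm (Equiv.refl A)).trans (Equiv.curry _ _ _)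
  have h1 : ∀ w : Tor d N → A, ∏ j : Fin d → Fin M,
      q (resE n (per (trans (s + castT N (fun i => (n : ℤ) * (j i : ℕ))) w))) =
      ∏ j, q (E w j) := by
    intro w
    refine Finset.prod_congr rfl fun j _ => ?_
    congr 1
    funext m
    simp only [resE, per, trans]
    change _ = w (s + castT N (fun i => (n : ℤ) * (j i : ℕ) + ((m i : ℕ) : ℤ)))
    rw [add_assoc, ← castT_add]
    rfl
  simp_rw [h1]
  rw [Equiv.sum_comp E (fun ω => ∏ j, q (ω j))]
  have := Finset.prod_univ_sum (fun _ : Fin d → Fin M => (Finset.univ :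
    Finset ((Fin d → Fin n) → A))) (fun _ v => q v)
  simp only [Fintype.piFinset_univ] at this
  rw [← this, hq1]
  simp

lemma Z_le_one [Fintype A] (M n N : ℕ) [NeZero N] (hN : N = M * n)
    (q : ((Fin d → Fin n) → A) → ℝ) (hq : ∀ v, 0 < q v) (hq1 : ∑ v, q v = 1) :
    ∑ w : Tor d N → A, Real.exp (SS (fun x => ((n : ℝ) ^ d)⁻¹ * Real.log (q (resE n x))) w) ≤ 1 := by
  have hN0 : (N : ℝ) ≠ 0 := by exact_mod_cast NeZero.ne N
  have hn0 : (n : ℝ) ≠ 0 := by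
    rintro h; apply hN0; rw [hN]; push_cast; rw [h]; simp
  have hM0 : (M : ℝ) ≠ 0 := by
    rintro h; apply hN0; rw [hN]; push_cast; rw [h]; simp
  set F : (Tor d N → A) → Tor d N → ℝ := fun w s => ∑ j : Fin d → Fin M,
    Real.log (q (resE n (per (trans (s + castT N (fun i => (n : ℤ) * (j i : ℕ))) w)))) with hF
  have havg : ∀ w : Tor d N → A,
      SS (fun x => ((n : ℝ) ^ d)⁻¹ * Real.log (q (resE n x))) w =
        ∑ s : Tor d N, ((N : ℝ) ^ d)⁻¹ • F w s := by
    intro w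
    simp only [hF, smul_eq_mul]
    rw [← Finset.mul_sum, Finset.sum_comm]
    have : ∀ j : Fin d → Fin M, ∑ s : Tor d N,
        Real.log (q (resE n (per (trans (s + castT N (fun i => (n : ℤ) * (j i : ℕ))) w)))) =
        ∑ s : Tor d N, Real.log (q (resE n (per (trans s w)))) := by
      intro j
      exact Equiv.sum_comp (Equiv.addRight (castT N (fun i => (n : ℤ) * (j i : ℕ))))
        (fun s => Real.log (q (resE n (per (trans s w)))))
    simp_rw [this]
    rw [SS, ← Finset.mul_sum, Finset.sum_const]
    simp only [Finset.card_univ, Fintype.card_pi, Fintype.card_fin, Finset.prod_const,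
      nsmul_eq_mul]
    have hNr : (N : ℝ) = M * n := by rw [hN]; push_cast; rfl
    rw [hNr]
    push_cast
    rw [mul_pow]
    field_simp
  have hw1 : ∑ _s : Tor d N, ((N : ℝ) ^ d)⁻¹ = 1 := by
    rw [Finset.sum_const, Finset.card_univ, card_Tor]
    simp [hN0]
  calc _ ≤ ∑ w : Tor d N → A, ∑ s : Tor d N, ((N : ℝ) ^ d)⁻¹ • Real.exp (F w s) := by
        refine Finset.sum_le_sum fun w _ => ?_
        rw [havg]
        exact convexOn_exp.map_sum_le (fun _ _ => by positivity) hw1 (fun _ _ => Set.mem_univ _)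
    _ = ∑ s : Tor d N, ((N : ℝ) ^ d)⁻¹ * ∑ w : Tor d N → A, Real.exp (F w s) := by
        rw [Finset.sum_comm]
        simp_rw [Finset.mul_sum, smul_eq_mul]
    _ = 1 := by
        rw [← hw1]
        refine Finset.sum_congr rfl fun s _ => ?_
        have : ∑ w : Tor d N → A, Real.exp (F w s) = 1 := by
          rw [← sum_blocks M n N hN q hq1 s]
          refine Finset.sum_congr rfl fun w _ => ?_
          rw [hF]
          simp only
          rw [Real.exp_sum]
          exact Finset.prod_congr rfl fun j _ => Real.exp_log (hq _)
        rw [this, mul_one]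

end Torus

set_option linter.unusedSectionVars false

section Var
variable {d : ℕ} {A : Type} [Fintype A] [TopologicalSpace A] [DiscreteTopology A]
  [MeasurableSpace A] [BorelSpace A]

lemma continuous_shift (n : Fin d → ℤ) : Continuous (shift (A := A) n) := by
  unfold shift; fun_prop

lemma continuous_resE (n : ℕ) : Continuous (resE (d := d) (A := A) n) := by
  unfold resE; fun_prop

lemma exists_bound (f : Cfg d A → ℝ) (hf : Continuous f) : ∃ B : ℝ, 0 ≤ B ∧ ∀ x, |f x| ≤ B := by
  obtain ⟨B, hB⟩ := isCompact_univ.exists_bound_of_continuousOn hf.continuousOn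
  exact ⟨max B 0, le_max_right _ _, fun x => (hB x (Set.mem_univ _)).trans (le_max_left _ _)⟩

lemma integrable_cont (f : Cfg d A → ℝ) (hf : Continuous f) (μ : Measure (Cfg d A))
    [IsProbabilityMeasure μ] : Integrable f μ := by
  obtain ⟨B, _, hB⟩ := exists_bound f hf
  exact Integrable.of_bound hf.aestronglyMeasurable B (Eventually.of_forall hB)

lemma int_cyl (n : ℕ) (μ : Measure (Cfg d A)) [IsProbabilityMeasure μ]
    (G : ((Fin d → Fin n) → A) → ℝ) :
    ∫ x, G (resE n x) ∂μ = ∑ v, (μ (cylE n v)).toReal * G v := by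
  have hm : Measurable (resE (d := d) (A := A) n) := (continuous_resE n).measurable
  have : IsProbabilityMeasure (μ.map (resE n)) := Measure.isProbabilityMeasure_map hm.aemeasurable
  rw [← integral_map (f := G) hm.aemeasurable (by
    exact (continuous_of_discreteTopology (f := G)).aestronglyMeasurable)]
  rw [integral_fintype]
  · refine Finset.sum_congr rfl fun v _ => ?_
    rw [smul_eq_mul, cylE_eq, Measure.real, Measure.map_apply hm (measurableSet_singleton v)]
  · exact Integrable.of_finite

lemma sum_cyl (n : ℕ) (μ : Measure (Cfg d A)) [IsProbabilityMeasure μ] :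
    ∑ v, (μ (cylE n v)).toReal = 1 := by
  have := int_cyl n μ (fun _ => 1)
  simpa using this.symm

lemma integral_shift (μ : Measure (Cfg d A)) (hμ : Invariant μ) (f : Cfg d A → ℝ)
    (hf : Continuous f) (n : Fin d → ℤ) : ∫ x, f (shift n x) ∂μ = ∫ x, f x ∂μ := by
  conv_rhs => rw [← hμ n]
  rw [integral_map (continuous_shift n).measurable.aemeasurable hf.aestronglyMeasurable]

/-- The Gibbs weights. -/
noncomputable def gw (N : ℕ) [NeZero N] (f : Cfg d A → ℝ) (w : Tor d N → A) : ℝ :=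
  Real.exp (SS f w) / ∑ w' : Tor d N → A, Real.exp (SS f w')

lemma gw_nonneg (N : ℕ) [NeZero N] (f : Cfg d A → ℝ) (w : Tor d N → A) : 0 ≤ gw N f w := by
  unfold gw; positivity

lemma gw_sum [Nonempty A] (N : ℕ) [NeZero N] (f : Cfg d A → ℝ) : ∑ w, gw N f w = 1 := by
  unfold gw
  rw [← Finset.sum_div]
  exact div_self (Finset.sum_pos (fun i _ => Real.exp_pos _) Finset.univ_nonempty).ne'

/-- The periodic Gibbs measure. -/
noncomputable def gm (N : ℕ) [NeZero N] (f : Cfg d A → ℝ) : Measure (Cfg d A) :=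
  ∑ w : Tor d N → A, ∑ t : Tor d N,
    ENNReal.ofReal (gw N f w * ((N : ℝ) ^ d)⁻¹) • Measure.dirac (per (trans t w))

lemma gm_prob [Nonempty A] (N : ℕ) [NeZero N] (f : Cfg d A → ℝ) :
    IsProbabilityMeasure (gm N f) := by
  constructor
  have hN0 : (N : ℝ) ≠ 0 := by exact_mod_cast NeZero.ne N
  simp only [gm, Measure.finsetSum_apply, Measure.smul_apply, smul_eq_mul, measure_univ, mul_one]
  have h : ∀ w : Tor d N → A, ∀ t : Tor d N, 0 ≤ gw N f w * ((N : ℝ) ^ d)⁻¹ := fun w _ =>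
    mul_nonneg (gw_nonneg N f w) (by positivity)
  have : ∀ w : Tor d N → A, ∑ t : Tor d N, ENNReal.ofReal (gw N f w * ((N : ℝ) ^ d)⁻¹) =
      ENNReal.ofReal (gw N f w) := by
    intro w
    rw [← ENNReal.ofReal_sum_of_nonneg (fun t _ => h w t), Finset.sum_const, Finset.card_univ,
      card_Tor]
    congr 1
    simp only [nsmul_eq_mul, Nat.cast_pow]
    field_simp
  simp_rw [this]
  rw [← ENNReal.ofReal_sum_of_nonneg (fun w _ => gw_nonneg N f w), gw_sum]
  simp

lemma gm_integral [Nonempty A] (N : ℕ) [NeZero N] (f g : Cfg d A → ℝ) (hg : Continuous g) :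
    ∫ x, g x ∂(gm N f) = ((N : ℝ) ^ d)⁻¹ * ∑ w, gw N f w * SS g w := by
  have hi : ∀ (c : ℝ) (x : Cfg d A), Integrable g (ENNReal.ofReal c • Measure.dirac x) := by
    intro c x
    exact (integrable_cont g hg _).smul_measure ENNReal.ofReal_ne_top
  unfold gm
  rw [integral_finsetSum_measure (fun w _ => integrable_finsetSum_measure.2 fun t _ => hi _ _)]
  rw [Finset.mul_sum]
  refine Finset.sum_congr rfl fun w _ => ?_
  rw [integral_finsetSum_measure (fun t _ => hi _ _)]
  simp_rw [integral_smul_measure, integral_dirac]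
  rw [← Finset.smul_sum, ENNReal.toReal_ofReal
    (mul_nonneg (gw_nonneg N f w) (by positivity)), smul_eq_mul, SS]
  ring

lemma SS_shift {N : ℕ} [NeZero N] (g : Cfg d A → ℝ) (n : Fin d → ℤ) (w : Tor d N → A) :
    SS (fun x => g (shift n x)) w = SS g w := by
  unfold SS
  simp_rw [shift_per, trans_trans]
  exact Equiv.sum_comp (Equiv.addRight (castT N n)) (fun t => g (per (trans t w)))

instance factNZ (k : ℕ) : NeZero (k.factorial) := ⟨Nat.factorial_ne_zero k⟩

/-- Limit pressure along an ultrafilter. -/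
noncomputable def PL (f : Cfg d A → ℝ) : ℝ :=
  limUnder (hyperfilter ℕ : Filter ℕ) (fun k : ℕ => PN (k.factorial) f)

lemma abs_PN_le [Nonempty A] (N : ℕ) [NeZero N] (f : Cfg d A → ℝ) (B : ℝ)
    (hB : ∀ x, |f x| ≤ B) : |PN N f| ≤ Real.log (Fintype.card A) + B := by
  have hN0 : (0 : ℝ) < N := by exact_mod_cast NeZero.pos N
  have hcard : (0 : ℝ) < Fintype.card A := by exact_mod_cast Fintype.card_pos
  have hlogA : 0 ≤ Real.log (Fintype.card A) :=
    Real.log_nonneg (by exact_mod_cast Fintype.card_pos)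
  have hS : ∀ w : Tor d N → A, |SS f w| ≤ (N : ℝ) ^ d * B := by
    intro w
    calc |SS f w| ≤ ∑ t : Tor d N, |f (per (trans t w))| := Finset.abs_sum_le_sum_abs _ _
      _ ≤ ∑ t : Tor d N, B := Finset.sum_le_sum fun t _ => hB _
      _ = _ := by rw [Finset.sum_const, Finset.card_univ, card_Tor]; simp
  have hc : (∑ _w : Tor d N → A, Real.exp ((N : ℝ) ^ d * B)) =
      (Fintype.card A : ℝ) ^ (N ^ d) * Real.exp ((N : ℝ) ^ d * B) := by
    rw [Finset.sum_const, Finset.card_univ, Fintype.card_fun, card_Tor]; simp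
  have hup : Real.log (∑ w : Tor d N → A, Real.exp (SS f w)) ≤
      (N : ℝ) ^ d * (Real.log (Fintype.card A) + B) := by
    have h1 : (∑ w : Tor d N → A, Real.exp (SS f w)) ≤
        (Fintype.card A : ℝ) ^ (N ^ d) * Real.exp ((N : ℝ) ^ d * B) := by
      rw [← hc]
      exact Finset.sum_le_sum fun w _ => Real.exp_le_exp.2 (abs_le.1 (hS w)).2
    have h2 := Real.log_le_log
      (Finset.sum_pos (fun i _ => Real.exp_pos _) Finset.univ_nonempty) h1
    rw [Real.log_mul (by positivity) (by positivity), Real.log_exp, Real.log_pow] at h2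
    push_cast at h2
    linarith
  have hlow : -((N : ℝ) ^ d * (Real.log (Fintype.card A) + B)) ≤
      Real.log (∑ w : Tor d N → A, Real.exp (SS f w)) := by
    obtain ⟨w0⟩ : Nonempty (Tor d N → A) := inferInstance
    have h1 : Real.exp (SS f w0) ≤ ∑ w : Tor d N → A, Real.exp (SS f w) :=
      Finset.single_le_sum (f := fun w => Real.exp (SS f w))
        (fun w _ => (Real.exp_pos _).le) (Finset.mem_univ w0)
    have h2 := Real.log_le_log (Real.exp_pos _) h1
    rw [Real.log_exp] at h2
    have h3 := (abs_le.1 (hS w0)).1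
    have h4 : 0 ≤ (N : ℝ) ^ d * Real.log (Fintype.card A) := by positivity
    linarith
  unfold PN
  rw [abs_mul, abs_of_pos (by positivity : (0 : ℝ) < ((N : ℝ) ^ d)⁻¹),
    inv_mul_le_iff₀ (by positivity), abs_le]
  exact ⟨hlow, hup⟩

lemma PL_tendsto [Nonempty A] (f : Cfg d A → ℝ) (hf : Continuous f) :
    Tendsto (fun k => PN (k.factorial) f) (hyperfilter ℕ : Filter ℕ) (𝓝 (PL f)) := by
  obtain ⟨B, _, hB⟩ := exists_bound f hf
  apply tendsto_nhds_limUnder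
  have hc := isCompact_Icc (a := -(Real.log (Fintype.card A) + B))
    (b := Real.log (Fintype.card A) + B)
  obtain ⟨x, _, hx⟩ := hc.ultrafilter_le_nhds ((hyperfilter ℕ).map (fun k : ℕ => PN (k.factorial) f))
    (by
      rw [Ultrafilter.coe_map, le_principal_iff, mem_map]
      exact Eventually.of_forall fun k => abs_le.1 (abs_PN_le _ f B hB))
  exact ⟨x, hx⟩

lemma hyper_ge (n : ℕ) : ∀ᶠ k in (hyperfilter ℕ : Filter ℕ), n ≤ k := by
  have : (hyperfilter ℕ : Filter ℕ) ≤ atTop := by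
    rw [← Nat.cofinite_eq_atTop]; exact hyperfilter_le_cofinite
  exact this (eventually_ge_atTop n)

lemma log_q_bound {V : Type*} [Fintype V] (p : V → ℝ) (hp : ∀ v, 0 ≤ p v) (hs : ∑ v, p v = 1)
    (ε : ℝ) (hε : 0 < ε) :
    -∑ v, p v * Real.log ((p v + ε) / (1 + ε * Fintype.card V)) ≤
      ∑ v, Real.negMulLog (p v) + ε * Fintype.card V := by
  have key : ∀ v, -(p v * Real.log ((p v + ε) / (1 + ε * Fintype.card V))) ≤
      Real.negMulLog (p v) + p v * (ε * Fintype.card V) := by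
    intro v
    rcases (hp v).eq_or_lt with h | h
    · rw [← h]; simp
    · have hpos : (0 : ℝ) < 1 + ε * Fintype.card V := by positivity
      rw [Real.log_div (by positivity) hpos.ne']
      have h1 : Real.log (p v) ≤ Real.log (p v + ε) := Real.log_le_log h (by linarith)
      have h2 := Real.log_le_sub_one_of_pos hpos
      unfold Real.negMulLog
      nlinarith
  rw [← Finset.sum_neg_distrib]
  calc _ ≤ ∑ v, (Real.negMulLog (p v) + p v * (ε * Fintype.card V)) :=
        Finset.sum_le_sum fun v _ => key v
    _ = _ := by rw [Finset.sum_add_distrib, ← Finset.sum_mul, hs, one_mul]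

lemma hard_level [Nonempty A] (M n N : ℕ) [NeZero N] (hN : N = M * n) (f : Cfg d A → ℝ)
    (hf : Continuous f)
    (q : ((Fin d → Fin n) → A) → ℝ) (hq : ∀ v, 0 < q v) (hq1 : ∑ v, q v = 1) :
    PN N f - ∫ x, f x ∂(gm N f) +
      ∫ x, (((n : ℝ) ^ d)⁻¹ * Real.log (q (resE n x))) ∂(gm N f) ≤ 0 := by
  set g : Cfg d A → ℝ := fun x => ((n : ℝ) ^ d)⁻¹ * Real.log (q (resE n x)) with hg
  have hgc : Continuous g :=
    (continuous_of_discreteTopology (f := fun v => ((n : ℝ) ^ d)⁻¹ * Real.log (q v))).comp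
      (continuous_resE n)
  have h1 := Z_le_one M n N hN q hq hq1
  have h2 := gibbs_ineq (gw N f) (fun w => SS g w) (gw_nonneg N f) (gw_sum N f)
  have h3 := gibbs_eq (fun w : Tor d N → A => SS f w)
  change ∑ w, gw N f w * SS f w + ∑ w, Real.negMulLog (gw N f w) = _ at h3
  have h4 : Real.log (∑ w : Tor d N → A, Real.exp (SS g w)) ≤ 0 :=
    Real.log_nonpos (Finset.sum_nonneg fun w _ => (Real.exp_pos _).le) h1
  rw [gm_integral N f f hf, gm_integral N f g hgc]
  unfold PN
  rw [← mul_sub, ← mul_add]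
  apply mul_nonpos_of_nonneg_of_nonpos (by positivity)
  linarith

lemma hard_side [Nonempty A] (f : Cfg d A → ℝ) (hf : Continuous f) :
    ∃ μ : Measure (Cfg d A), IsProbabilityMeasure μ ∧ Invariant μ ∧
      PL f ≤ entropy μ + ∫ x, f x ∂μ := by
  let ν : ℕ → ProbabilityMeasure (Cfg d A) := fun k => ⟨gm (k.factorial) f, gm_prob _ f⟩
  obtain ⟨μ, _, hμ⟩ := isCompact_univ.ultrafilter_le_nhds ((hyperfilter ℕ).map ν) (by simp)
  have hμ' : Tendsto ν (hyperfilter ℕ : Filter ℕ) (𝓝 μ) := hμ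
  rw [ProbabilityMeasure.tendsto_iff_forall_integral_tendsto] at hμ'
  have hlim : ∀ g : Cfg d A → ℝ, Continuous g →
      Tendsto (fun k : ℕ => ∫ x, g x ∂(gm (k.factorial) f)) (hyperfilter ℕ : Filter ℕ)
        (𝓝 (∫ x, g x ∂(μ : Measure (Cfg d A)))) := by
    intro g hg
    exact hμ' (BoundedContinuousFunction.mkOfCompact ⟨g, hg⟩)
  refine ⟨μ, inferInstance, ?_, ?_⟩
  · intro n
    have hm : Measurable (shift (A := A) n) := (continuous_shift n).measurable
    have : IsProbabilityMeasure ((μ : Measure (Cfg d A)).map (shift n)) :=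
      Measure.isProbabilityMeasure_map hm.aemeasurable
    apply ext_of_forall_integral_eq_of_IsFiniteMeasure
    intro g
    rw [integral_map hm.aemeasurable g.continuous.aestronglyMeasurable]
    have h1 := hlim (fun x => g (shift n x)) (g.continuous.comp (continuous_shift n))
    have h2 := hlim g g.continuous
    refine tendsto_nhds_unique h1 (h2.congr fun k => ?_)
    rw [gm_integral _ f _ g.continuous, gm_integral _ f (fun x => g (shift n x))
      (g.continuous.comp (continuous_shift n))]
    simp_rw [SS_shift]
  · rw [← sub_le_iff_le_add]
    unfold entropy
    have : Nonempty {n : ℕ // 1 ≤ n} := ⟨⟨1, le_rfl⟩⟩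
    apply le_ciInf
    rintro ⟨n, hn⟩
    simp only
    set K : ℝ := (Fintype.card ((Fin d → Fin n) → A) : ℝ) with hK
    have hKpos : 0 < K := by rw [hK]; exact_mod_cast Fintype.card_pos
    have hnpos : (0 : ℝ) < (n : ℝ) ^ d := by positivity
    set p : ((Fin d → Fin n) → A) → ℝ := fun v => ((μ : Measure (Cfg d A)) (cylE n v)).toReal with hp
    have hp0 : ∀ v, 0 ≤ p v := fun v => ENNReal.toReal_nonneg
    have hp1 : ∑ v, p v = 1 := sum_cyl n _
    have main : ∀ ε : ℝ, 0 < ε → PL f - ∫ x, f x ∂(μ : Measure (Cfg d A)) ≤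
        ((n : ℝ) ^ d)⁻¹ * (∑ v, Real.negMulLog (p v) + ε * K) := by
      intro ε hε
      set q : ((Fin d → Fin n) → A) → ℝ := fun v => (p v + ε) / (1 + ε * K) with hq
      have hq0 : ∀ v, 0 < q v := fun v => by have := hp0 v; simp only [hq]; positivity
      have hq1 : ∑ v, q v = 1 := by
        simp only [hq]
        rw [← Finset.sum_div, Finset.sum_add_distrib, hp1, Finset.sum_const, Finset.card_univ,
          nsmul_eq_mul, ← hK, mul_comm K]
        exact div_self (by positivity)
      have hgc : Continuous fun x : Cfg d A => ((n : ℝ) ^ d)⁻¹ * Real.log (q (resE n x)) :=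
        (continuous_of_discreteTopology (f := fun v => ((n : ℝ) ^ d)⁻¹ * Real.log (q v))).comp
          (continuous_resE n)
      have hl := ((PL_tendsto f hf).sub (hlim f hf)).add (hlim _ hgc)
      have hle := le_of_tendsto hl ((hyper_ge n).mono fun k hk => by
        obtain ⟨M, hM⟩ := Nat.dvd_factorial hn hk
        exact hard_level M n k.factorial (by rw [hM, mul_comm]) f hf q hq0 hq1)
      rw [int_cyl n _ (fun v => ((n : ℝ) ^ d)⁻¹ * Real.log (q v))] at hle
      have hb := log_q_bound p hp0 hp1 ε hε
      have e : ∑ v, ((μ : Measure (Cfg d A)) (cylE n v)).toReal * (((n : ℝ) ^ d)⁻¹ * Real.log (q v))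
          = ((n : ℝ) ^ d)⁻¹ * ∑ v, p v * Real.log ((p v + ε) / (1 + ε * K)) := by
        rw [Finset.mul_sum]
        exact Finset.sum_congr rfl fun v _ => by simp only [hp, hq]; ring
      rw [e] at hle
      have hb' := mul_le_mul_of_nonneg_left hb (inv_pos.2 hnpos).le
      rw [mul_neg] at hb'
      linarith
    apply le_of_forall_pos_le_add
    intro ε hε
    have := main (ε * (n : ℝ) ^ d / K) (by positivity)
    have e : ((n : ℝ) ^ d)⁻¹ * (∑ v, Real.negMulLog (p v) + ε * (n : ℝ) ^ d / K * K) =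
        ((n : ℝ) ^ d)⁻¹ * ∑ v, Real.negMulLog (p v) + ε := by
      field_simp
    rw [e] at this
    exact this

end Var


lemma count_lim (d R : ℕ) (ε : ℝ) (hε : 0 < ε) : ∃ K0 : ℕ, ∀ k : ℕ, K0 ≤ k →
    2 * R ≤ k ∧ 1 ≤ k ∧ ((k : ℝ) + 2 * R) ^ d - ((k : ℝ) - 2 * R) ^ d ≤ ε * (k : ℝ) ^ d := by
  have h0 : Tendsto (fun k : ℕ => (2 * R : ℝ) / (k : ℝ)) atTop (𝓝 0) :=
    tendsto_const_div_atTop_nhds_zero_nat _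
  have h1 : Tendsto (fun k : ℕ => (1 + (2 * R : ℝ) / (k : ℝ)) ^ d - (1 - (2 * R : ℝ) / (k : ℝ)) ^ d)
      atTop (𝓝 ((1 + 0) ^ d - (1 - 0) ^ d)) :=
    ((h0.const_add 1).pow d).sub ((h0.const_sub 1).pow d)
  simp only [add_zero, sub_zero, one_pow, sub_self] at h1
  have h2 := (h1.eventually (gt_mem_nhds hε)).and
    ((eventually_ge_atTop (2 * R)).and (eventually_ge_atTop 1))
  obtain ⟨K0, hK0⟩ := eventually_atTop.1 h2
  refine ⟨K0, fun k hk => ?_⟩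
  obtain ⟨h3, h4, h5⟩ := hK0 k hk
  refine ⟨h4, h5, ?_⟩
  have hk0 : (0 : ℝ) < k := by exact_mod_cast h5
  have e1 : (k : ℝ) + 2 * R = k * (1 + (2 * R : ℝ) / (k : ℝ)) := by field_simp
  have e2 : (k : ℝ) - 2 * R = k * (1 - (2 * R : ℝ) / (k : ℝ)) := by field_simp
  rw [e1, e2, mul_pow, mul_pow, ← mul_sub, mul_comm]
  gcongr

section Easy
variable {d : ℕ} {A : Type} [Fintype A] [TopologicalSpace A] [DiscreteTopology A]
  [MeasurableSpace A] [BorelSpace A]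

/-- Uniform continuity in terms of coordinates. -/
def UC (f : Cfg d A → ℝ) : Prop := ∀ ε : ℝ, 0 < ε → ∃ R : ℕ, ∀ x y : Cfg d A,
  (∀ m : Fin d → ℤ, (∀ i, |m i| ≤ (R : ℤ)) → x m = y m) → |f x - f y| ≤ ε

lemma boxSum_close (f : Cfg d A → ℝ) (hf : Continuous f) (hu : UC f) (ε : ℝ) (hε : 0 < ε) :
    ∃ K0 : ℕ, ∀ k : ℕ, K0 ≤ k → ∀ x y : Cfg d A, (∀ m ∈ box d 0 k, x m = y m) →
      |boxSum f k x - boxSum f k y| ≤ ε * (k : ℝ) ^ d := by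
  obtain ⟨B, hB0, hB⟩ := exists_bound f hf
  obtain ⟨R, hR⟩ := hu (ε / 2) (by positivity)
  obtain ⟨K0, hK0⟩ := count_lim d R (ε / (4 * B + 1)) (by positivity)
  refine ⟨K0, fun k hk x y hxy => ?_⟩
  obtain ⟨h1, h2, h3⟩ := hK0 k hk
  have hsub : box d R (k - R) ⊆ box d 0 k := by
    intro m hm
    rw [mem_box] at *
    intro i
    have := hm i
    omega
  have hcard1 : ((box d 0 k).card : ℝ) = (k : ℝ) ^ d := by rw [card_box]; simp
  have hcard2 : ((box d R (k - R)).card : ℝ) = ((k : ℝ) - 2 * R) ^ d := by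
    rw [card_box]
    have : ((k : ℤ) - R - R).toNat = k - 2 * R := by omega
    rw [this]
    push_cast [Nat.cast_sub h1]
    rfl
  have hcard3 : ((box d 0 k \ box d R (k - R)).card : ℝ) = (k : ℝ) ^ d - ((k : ℝ) - 2 * R) ^ d := by
    rw [Finset.card_sdiff_of_subset hsub, Nat.cast_sub (Finset.card_le_card hsub), hcard1, hcard2]
  unfold boxSum
  rw [← Finset.sum_sub_distrib, ← Finset.sum_sdiff hsub]
  have hbad : |∑ m ∈ box d 0 k \ box d R (k - R), (f (shift m x) - f (shift m y))| ≤
      ((k : ℝ) ^ d - ((k : ℝ) - 2 * R) ^ d) * (2 * B) := by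
    rw [← hcard3]
    refine (Finset.abs_sum_le_sum_abs _ _).trans ?_
    rw [← nsmul_eq_mul]
    refine Finset.sum_le_card_nsmul _ _ _ fun m _ => ?_
    have := hB (shift m x)
    have := hB (shift m y)
    have := abs_sub (f (shift m x)) (f (shift m y))
    linarith
  have hgood : |∑ m ∈ box d R (k - R), (f (shift m x) - f (shift m y))| ≤
      (k : ℝ) ^ d * (ε / 2) := by
    refine (Finset.abs_sum_le_sum_abs _ _).trans ?_
    calc _ ≤ (box d R (k - R)).card • (ε / 2) := by
          refine Finset.sum_le_card_nsmul _ _ _ fun m hm => hR _ _ fun p hp => ?_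
          rw [mem_box] at hm
          apply hxy
          rw [mem_box]
          intro i
          have h4 := hm i
          have h5 := abs_le.1 (hp i)
          simp only [Pi.add_apply]
          omega
      _ ≤ _ := by
          rw [nsmul_eq_mul, ← hcard1]
          gcongr
  have hpow : (0 : ℝ) ≤ (k : ℝ) ^ d := by positivity
  have hmono : ((k : ℝ) + 2 * R) ^ d ≥ (k : ℝ) ^ d := by
    gcongr
    have : (0 : ℝ) ≤ R := by positivity
    linarith
  have h6 : ((k : ℝ) ^ d - ((k : ℝ) - 2 * R) ^ d) * (2 * B) ≤ (k : ℝ) ^ d * (ε / 2) := by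
    calc _ ≤ (ε / (4 * B + 1) * (k : ℝ) ^ d) * (2 * B) := by gcongr; linarith
      _ = (k : ℝ) ^ d * (ε / 2) * ((4 * B) / (4 * B + 1)) := by field_simp; ring
      _ ≤ (k : ℝ) ^ d * (ε / 2) * 1 := by
          gcongr
          rw [div_le_one (by positivity)]; linarith
      _ = _ := mul_one _
  calc _ ≤ _ := abs_add_le _ _
    _ ≤ (k : ℝ) ^ d * (ε / 2) + (k : ℝ) ^ d * (ε / 2) := by linarith
    _ = _ := by ring

lemma integral_boxSum (μ : Measure (Cfg d A)) [IsProbabilityMeasure μ] (hμ : Invariant μ)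
    (f : Cfg d A → ℝ) (hf : Continuous f) (k : ℕ) :
    ∫ x, boxSum f k x ∂μ = (k : ℝ) ^ d * ∫ x, f x ∂μ := by
  unfold boxSum
  rw [integral_finset_sum _ (fun m _ => integrable_cont (fun x => f (shift m x))
    (hf.comp (continuous_shift m)) μ)]
  simp_rw [integral_shift μ hμ f hf]
  rw [Finset.sum_const, card_box]
  simp

lemma continuous_boxSum (f : Cfg d A → ℝ) (hf : Continuous f) (k : ℕ) :
    Continuous (boxSum f k) := by
  unfold boxSum
  exact continuous_finset_sum _ fun m _ => hf.comp (continuous_shift m)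

lemma easy_level (f : Cfg d A → ℝ) (hf : Continuous f) (ε : ℝ)
    (μ : Measure (Cfg d A)) [IsProbabilityMeasure μ] (hμ : Invariant μ) (N : ℕ) [NeZero N]
    (hclose : ∀ x y : Cfg d A, (∀ m ∈ box d 0 N, x m = y m) →
      |boxSum f N x - boxSum f N y| ≤ ε * (N : ℝ) ^ d) :
    entropy μ + ∫ x, f x ∂μ ≤ PN N f + ε := by
  have hN0 : (0 : ℝ) < N := by exact_mod_cast NeZero.pos N
  have hbij : Function.Bijective (fun m : Fin d → Fin N => castT N (emb m)) := by
    rw [Fintype.bijective_iff_injective_and_card]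
    refine ⟨fun m m' h => ?_, ?_⟩
    · have hb : ∀ m : Fin d → Fin N, emb m ∈ box d 0 N := by
        intro m; rw [mem_box]; intro i; simp [emb]
      have := castT_injOn N (hb m) (hb m') h
      funext i
      have := congrFun this i
      simp only [emb] at this
      exact Fin.ext (by exact_mod_cast this)
    · rw [card_Tor]; simp
  let e := Equiv.ofBijective _ hbij
  have he : ∀ m, e.symm (castT N (emb m)) = m := fun m => e.symm_apply_apply m
  have hent : entropy μ ≤ ((N : ℝ) ^ d)⁻¹ *
      ∑ v : (Fin d → Fin N) → A, Real.negMulLog (μ (cylE N v)).toReal := by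
    unfold entropy
    refine ciInf_le (f := fun n : {n : ℕ // 1 ≤ n} => ((n.1 : ℝ) ^ d)⁻¹ *
      ∑ w : (Fin d → Fin n.1) → A, Real.negMulLog (μ (cylE n.1 w)).toReal) ?_
      ⟨N, NeZero.pos N⟩
    refine ⟨0, ?_⟩
    rintro _ ⟨n, rfl⟩
    refine mul_nonneg (by positivity) (Finset.sum_nonneg fun v _ => ?_)
    refine Real.negMulLog_nonneg ENNReal.toReal_nonneg ?_
    exact ENNReal.toReal_le_of_le_ofReal zero_le_one (by simpa using prob_le_one)
  have hg := gibbs_ineq (fun v : (Fin d → Fin N) → A => (μ (cylE N v)).toReal)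
    (fun v => SS f (fun t => v (e.symm t))) (fun v => ENNReal.toReal_nonneg) (sum_cyl N μ)
  have hZ : ∑ v : (Fin d → Fin N) → A, Real.exp (SS f (fun t => v (e.symm t))) =
      ∑ w : Tor d N → A, Real.exp (SS f w) :=
    Equiv.sum_comp (Equiv.arrowCongr e (Equiv.refl A)) (fun w => Real.exp (SS f w))
  rw [hZ, ← int_cyl N μ (fun v => SS f (fun t => v (e.symm t)))] at hg
  have hint : (N : ℝ) ^ d * ∫ x, f x ∂μ - ε * (N : ℝ) ^ d ≤
      ∫ x, SS f (fun t => resE N x (e.symm t)) ∂μ := by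
    rw [← integral_boxSum μ hμ f hf N]
    have hi1 := integrable_cont _ (continuous_boxSum f hf N) μ
    have hi2 : Integrable (fun x => SS f (fun t => resE N x (e.symm t))) μ :=
      integrable_cont _ ((continuous_of_discreteTopology
        (f := fun v : (Fin d → Fin N) → A => SS f (fun t => v (e.symm t)))).comp
        (continuous_resE N)) μ
    have hc : ∫ _x : Cfg d A, ε * (N : ℝ) ^ d ∂μ = ε * (N : ℝ) ^ d := by simp
    rw [← hc, ← integral_sub hi1 (integrable_const _)]
    refine integral_mono (hi1.sub (integrable_const _)) hi2 fun x => ?_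
    simp only
    rw [SS_eq_boxSum]
    have := hclose x (per (fun t => resE N x (e.symm t))) (by
      rw [← resE_eq_iff]
      funext m
      simp only [resE, per, he])
    have := (abs_le.1 this).2
    linarith
  unfold PN
  have h1 : ((N : ℝ) ^ d)⁻¹ * ((N : ℝ) ^ d * ∫ x, f x ∂μ - ε * (N : ℝ) ^ d +
      ∑ v : (Fin d → Fin N) → A, Real.negMulLog (μ (cylE N v)).toReal) ≤
      ((N : ℝ) ^ d)⁻¹ * Real.log (∑ w : Tor d N → A, Real.exp (SS f w)) := by
    gcongr
    linarith
  have h2 : ((N : ℝ) ^ d)⁻¹ * ((N : ℝ) ^ d * ∫ x, f x ∂μ - ε * (N : ℝ) ^ d +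
      ∑ v : (Fin d → Fin N) → A, Real.negMulLog (μ (cylE N v)).toReal) =
      ∫ x, f x ∂μ - ε + ((N : ℝ) ^ d)⁻¹ *
      ∑ v : (Fin d → Fin N) → A, Real.negMulLog (μ (cylE N v)).toReal := by
    field_simp
  linarith

lemma easy_side [Nonempty A] (f : Cfg d A → ℝ) (hf : Continuous f) (hu : UC f)
    (μ : Measure (Cfg d A)) [IsProbabilityMeasure μ] (hμ : Invariant μ) :
    entropy μ + ∫ x, f x ∂μ ≤ PL f := by
  apply le_of_forall_pos_le_add
  intro ε hε
  obtain ⟨K0, hK0⟩ := boxSum_close f hf hu ε hε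
  refine ge_of_tendsto ((PL_tendsto f hf).add_const ε) ((hyper_ge K0).mono fun k hk => ?_)
  exact easy_level f hf ε μ hμ _ (hK0 _ (hk.trans (Nat.self_le_factorial k)))

end Easy


section Inter
variable {d : ℕ} {A : Type} [Fintype A] [TopologicalSpace A] [DiscreteTopology A]
  [MeasurableSpace A] [BorelSpace A]

/-- Finite sets containing the origin. -/
abbrev Fz (d : ℕ) : Type := {Λ : Finset (Fin d → ℤ) // (0 : Fin d → ℤ) ∈ Λ}

/-- Sup norm of an interaction term. -/
noncomputable def nrm (Φ : Finset (Fin d → ℤ) → Cfg d A → ℝ) (Λ : Fz d) : ℝ :=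
  ⨆ x : Cfg d A, |Φ Λ.1 x|

/-- Being contained in a ball. -/
def inB (r : ℕ) (Λ : Fz d) : Prop := ∀ m ∈ Λ.1, ∀ i, |m i| ≤ (r : ℤ)

/-- Tail norms. -/
noncomputable def tl (Φ : Finset (Fin d → ℤ) → Cfg d A → ℝ) (r : ℕ) (Λ : Fz d) : ℝ :=
  if inB r Λ then 0 else nrm Φ Λ

variable (Φ : Finset (Fin d → ℤ) → Cfg d A → ℝ)

lemma nrm_nonneg (Λ : Fz d) : 0 ≤ nrm Φ Λ := Real.iSup_nonneg fun _ => abs_nonneg _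

lemma tl_nonneg (r : ℕ) (Λ : Fz d) : 0 ≤ tl Φ r Λ := by
  unfold tl; split_ifs; exacts [le_rfl, nrm_nonneg Φ Λ]

lemma tl_le (r : ℕ) (Λ : Fz d) : tl Φ r Λ ≤ nrm Φ Λ := by
  unfold tl; split_ifs; exacts [nrm_nonneg Φ Λ, le_rfl]

lemma le_nrm (hcont : ∀ Λ, Continuous (Φ Λ)) (Λ : Fz d) (x : Cfg d A) : |Φ Λ.1 x| ≤ nrm Φ Λ := by
  obtain ⟨B, _, hB⟩ := exists_bound (Φ Λ.1) (hcont _)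
  exact le_ciSup (f := fun x => |Φ Λ.1 x|) ⟨B, by rintro _ ⟨y, rfl⟩; exact hB y⟩ x

lemma card_ge_one (Λ : Fz d) : (1 : ℝ) ≤ (Λ.1.card : ℝ) := by
  have : 0 < Λ.1.card := Finset.card_pos.mpr ⟨0, Λ.2⟩
  exact_mod_cast this

lemma div_bound (hcont : ∀ Λ, Continuous (Φ Λ)) (Λ : Fz d) (x : Cfg d A) :
    ‖Φ Λ.1 x / (Λ.1.card : ℝ)‖ ≤ nrm Φ Λ := by
  have h1 := card_ge_one Λ
  rw [Real.norm_eq_abs, abs_div, abs_of_pos (by linarith : (0 : ℝ) < (Λ.1.card : ℝ))]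
  exact (div_le_self (abs_nonneg _) h1).trans (le_nrm Φ hcont Λ x)

lemma cont_pot (hcont : ∀ Λ, Continuous (Φ Λ)) (hsum : Summable (nrm Φ)) :
    Continuous (potentialOfInteraction Φ) := by
  unfold potentialOfInteraction
  exact continuous_tsum (fun Λ => (hcont _).div_const _) hsum (fun Λ x => div_bound Φ hcont Λ x)

lemma pot_hasSum (hcont : ∀ Λ, Continuous (Φ Λ)) (hsum : Summable (nrm Φ)) (x : Cfg d A) :
    HasSum (fun Λ : Fz d => Φ Λ.1 x / (Λ.1.card : ℝ)) (potentialOfInteraction Φ x) :=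
  (Summable.of_norm_bounded hsum (fun Λ => div_bound Φ hcont Λ x)).hasSum

lemma pot_sum_hasSum (hcont : ∀ Λ, Continuous (Φ Λ)) (hsum : Summable (nrm Φ))
    {J : Type*} (T : Finset J) (X Y : J → Cfg d A) :
    HasSum (fun Λ : Fz d => (∑ t ∈ T, (Φ Λ.1 (X t) - Φ Λ.1 (Y t))) / (Λ.1.card : ℝ))
      (∑ t ∈ T, (potentialOfInteraction Φ (X t) - potentialOfInteraction Φ (Y t))) := by
  have := hasSum_sum (s := T) (fun t _ => (pot_hasSum Φ hcont hsum (X t)).sub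
    (pot_hasSum Φ hcont hsum (Y t)))
  have e : (fun Λ : Fz d => (∑ t ∈ T, (Φ Λ.1 (X t) - Φ Λ.1 (Y t))) / (Λ.1.card : ℝ)) =
      fun Λ : Fz d => ∑ t ∈ T, (Φ Λ.1 (X t) / (Λ.1.card : ℝ) - Φ Λ.1 (Y t) / (Λ.1.card : ℝ)) := by
    funext Λ
    rw [Finset.sum_div]
    exact Finset.sum_congr rfl fun t _ => sub_div _ _ _
  rw [e]
  exact this

lemma tl_summable (hsum : Summable (nrm Φ)) (r : ℕ) : Summable (tl Φ r) :=
  Summable.of_nonneg_of_le (tl_nonneg Φ r) (tl_le Φ r) hsum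

lemma tail_small (hsum : Summable (nrm Φ)) (ε : ℝ) (hε : 0 < ε) :
    ∃ r : ℕ, ∑' Λ, tl Φ r Λ ≤ ε := by
  obtain ⟨s, hs⟩ := (hsum.hasSum.eventually (lt_mem_nhds (sub_lt_self _ hε))).exists
  refine ⟨(s.biUnion fun Λ => Λ.1).sup supNorm, ?_⟩
  set r := (s.biUnion fun Λ => Λ.1).sup supNorm with hr
  have hin : ∀ Λ ∈ s, inB r Λ := by
    intro Λ hΛ m hm i
    have h1 : supNorm m ≤ r := Finset.le_sup (f := supNorm)
      (Finset.mem_biUnion.mpr ⟨Λ, hΛ, hm⟩)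
    have h2 : (m i).natAbs ≤ supNorm m :=
      Finset.le_sup (f := fun i => (m i).natAbs) (Finset.mem_univ i)
    rw [Int.abs_eq_natAbs]
    exact_mod_cast h2.trans h1
  have hsm : Summable (fun Λ => nrm Φ Λ - tl Φ r Λ) := hsum.sub (tl_summable Φ hsum r)
  have h1 : ∑ Λ ∈ s, (nrm Φ Λ - tl Φ r Λ) ≤ ∑' Λ, (nrm Φ Λ - tl Φ r Λ) :=
    hsm.sum_le_tsum s fun Λ _ => by have := tl_le Φ r Λ; linarith
  have h2 : ∑ Λ ∈ s, (nrm Φ Λ - tl Φ r Λ) = ∑ Λ ∈ s, nrm Φ Λ :=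
    Finset.sum_congr rfl fun Λ hΛ => by simp [tl, hin Λ hΛ]
  rw [hsum.tsum_sub (tl_summable Φ hsum r)] at h1
  have : (∑' b, nrm Φ b) - ε < ∑ Λ ∈ s, nrm Φ Λ := hs
  linarith

lemma UC_pot (hcont : ∀ Λ, Continuous (Φ Λ)) (hsum : Summable (nrm Φ))
    (hloc : ∀ (Λ : Finset (Fin d → ℤ)) (x y : Cfg d A),
      (∀ m ∈ Λ, x m = y m) → Φ Λ x = Φ Λ y) : UC (potentialOfInteraction Φ) := by
  intro ε hε
  obtain ⟨r, hr⟩ := tail_small Φ hsum (ε / 2) (by positivity)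
  refine ⟨r, fun x y hxy => ?_⟩
  have h1 := (pot_hasSum Φ hcont hsum x).sub (pot_hasSum Φ hcont hsum y)
  have h2 := (tl_summable Φ hsum r).hasSum.mul_left 2
  have := h1.norm_le_of_bounded h2 (fun Λ => ?_)
  · rw [Real.norm_eq_abs] at this; linarith
  · by_cases hΛ : inB r Λ
    · rw [hloc Λ.1 x y fun m hm => hxy m (hΛ m hm)]
      simp [tl, hΛ]
    · simp only [tl, hΛ, if_false]
      have a1 := div_bound Φ hcont Λ x
      have a2 := div_bound Φ hcont Λ y
      exact (norm_sub_le _ _).trans (by linarith)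

lemma UC_mul {f : Cfg d A → ℝ} (hf : UC f) (β : ℝ) : UC (fun x => β * f x) := by
  intro ε hε
  obtain ⟨R, hR⟩ := hf (ε / (|β| + 1)) (by positivity)
  refine ⟨R, fun x y hxy => ?_⟩
  rw [← mul_sub, abs_mul]
  have h := hR x y hxy
  calc |β| * |f x - f y| ≤ (|β| + 1) * (ε / (|β| + 1)) := by
        gcongr; linarith
    _ = ε := by field_simp

/-- Number of translates meeting a set. -/
noncomputable def hit {N : ℕ} (T B : Finset (Tor d N)) (Λ : Fz d) : Finset (Tor d N) :=
  T.filter fun t => ∃ l ∈ Λ.1, t + castT N l ∈ B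

lemma hit_sum (hcont : ∀ Λ, Continuous (Φ Λ))
    (hloc : ∀ (Λ : Finset (Fin d → ℤ)) (x y : Cfg d A),
      (∀ m ∈ Λ, x m = y m) → Φ Λ x = Φ Λ y)
    {N : ℕ} (T B : Finset (Tor d N)) (w w' : Tor d N → A) (hB : ∀ t, t ∉ B → w t = w' t)
    (Λ : Fz d) :
    |∑ t ∈ T, (Φ Λ.1 (per (trans t w)) - Φ Λ.1 (per (trans t w')))| ≤
      2 * nrm Φ Λ * (hit T B Λ).card := by
  have h1 : ∑ t ∈ T, (Φ Λ.1 (per (trans t w)) - Φ Λ.1 (per (trans t w'))) =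
      ∑ t ∈ hit T B Λ, (Φ Λ.1 (per (trans t w)) - Φ Λ.1 (per (trans t w'))) := by
    symm
    apply Finset.sum_subset (Finset.filter_subset _ _)
    intro t ht hn
    rw [Finset.mem_filter, not_and] at hn
    have := hn ht
    push Not at this
    rw [hloc Λ.1 (per (trans t w)) (per (trans t w')) fun m hm => hB _ (this m hm), sub_self]
  rw [h1]
  refine (Finset.abs_sum_le_sum_abs _ _).trans ?_
  refine (Finset.sum_le_card_nsmul _ _ (2 * nrm Φ Λ) fun t _ => ?_).trans ?_
  · have a1 := le_nrm Φ hcont Λ (per (trans t w))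
    have a2 := le_nrm Φ hcont Λ (per (trans t w'))
    exact (abs_sub _ _).trans (by linarith)
  · rw [nsmul_eq_mul, mul_comm]

lemma hit_card {N : ℕ} (T B : Finset (Tor d N)) (Λ : Fz d) :
    (hit T B Λ).card ≤ B.card * Λ.1.card := by
  have : hit T B Λ ⊆ (B ×ˢ Λ.1).image (fun p => p.1 - castT N p.2) := by
    intro t ht
    rw [hit, Finset.mem_filter] at ht
    obtain ⟨_, l, hl, hb⟩ := ht
    rw [Finset.mem_image]
    exact ⟨(_, l), Finset.mem_product.mpr ⟨hb, hl⟩, by simp⟩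
  exact (Finset.card_le_card this).trans (Finset.card_image_le.trans (Finset.card_product _ _).le)

lemma hit_div (hcont : ∀ Λ, Continuous (Φ Λ))
    (hloc : ∀ (Λ : Finset (Fin d → ℤ)) (x y : Cfg d A),
      (∀ m ∈ Λ, x m = y m) → Φ Λ x = Φ Λ y)
    {N : ℕ} (T B : Finset (Tor d N)) (w w' : Tor d N → A) (hB : ∀ t, t ∉ B → w t = w' t)
    (Λ : Fz d) :
    |(∑ t ∈ T, (Φ Λ.1 (per (trans t w)) - Φ Λ.1 (per (trans t w')))) / (Λ.1.card : ℝ)| ≤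
      2 * B.card * nrm Φ Λ := by
  have hc := card_ge_one Λ
  have hc0 : (0 : ℝ) < (Λ.1.card : ℝ) := by linarith
  rw [abs_div, abs_of_pos hc0, div_le_iff₀ hc0]
  refine (hit_sum Φ hcont hloc T B w w' hB Λ).trans ?_
  have h2 : ((hit T B Λ).card : ℝ) ≤ B.card * Λ.1.card := by exact_mod_cast hit_card T B Λ
  have h3 := nrm_nonneg Φ Λ
  calc 2 * nrm Φ Λ * (hit T B Λ).card ≤ 2 * nrm Φ Λ * (B.card * Λ.1.card) := by gcongr
    _ = _ := by ring

lemma SS_diff (hcont : ∀ Λ, Continuous (Φ Λ)) (hsum : Summable (nrm Φ))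
    (hloc : ∀ (Λ : Finset (Fin d → ℤ)) (x y : Cfg d A),
      (∀ m ∈ Λ, x m = y m) → Φ Λ x = Φ Λ y)
    {N : ℕ} [NeZero N] (B : Finset (Tor d N)) (w w' : Tor d N → A)
    (hB : ∀ t, t ∉ B → w t = w' t) :
    |SS (potentialOfInteraction Φ) w - SS (potentialOfInteraction Φ) w'| ≤
      2 * B.card * ∑' Λ, nrm Φ Λ := by
  have h1 := pot_sum_hasSum Φ hcont hsum (Finset.univ : Finset (Tor d N))
    (fun t => per (trans t w)) (fun t => per (trans t w'))
  have h2 := hsum.hasSum.mul_left (2 * (B.card : ℝ))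
  have := h1.norm_le_of_bounded h2 (fun Λ => hit_div Φ hcont hloc _ B w w' hB Λ)
  rwa [Finset.sum_sub_distrib] at this

/-- A cube in the torus with corner `p`. -/
noncomputable def tb (N : ℕ) (p : Fin d → ℤ) (k : ℕ) : Finset (Tor d N) :=
  (box d 0 k).image fun m => castT N (p + m)

lemma tb_card (N : ℕ) (p : Fin d → ℤ) (k : ℕ) : (tb N p k).card ≤ k ^ d := by
  refine Finset.card_image_le.trans ?_
  rw [card_box]; simp

lemma castT_sub (N : ℕ) (m n : Fin d → ℤ) : castT N (m - n) = castT N m - castT N n := by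
  funext i; simp [castT]

lemma hit_outside (N : ℕ) [NeZero N] (p : Fin d → ℤ) (k r : ℕ) (Λ : Fz d) (hΛ : inB r Λ) :
    ((hit (Finset.univ \ tb N p k) (tb N p k) Λ).card : ℝ) ≤
      ((k : ℝ) + 2 * r) ^ d - (k : ℝ) ^ d := by
  have hsub : box d 0 k ⊆ box d (-r) (k + r) := by
    intro m hm
    rw [mem_box] at hm ⊢
    intro i; have := hm i; omega
  have : hit (Finset.univ \ tb N p k) (tb N p k) Λ ⊆
      (box d (-r) (k + r) \ box d 0 k).image (fun m => castT N (p + m)) := by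
    intro t ht
    rw [hit, Finset.mem_filter, Finset.mem_sdiff] at ht
    obtain ⟨⟨_, h1⟩, l, hl, hb⟩ := ht
    rw [tb, Finset.mem_image] at hb
    obtain ⟨m, hm, he⟩ := hb
    have hte : castT N (p + (m - l)) = t := by
      rw [← add_sub_assoc, castT_sub, he]; simp
    refine Finset.mem_image.mpr ⟨m - l, ?_, hte⟩
    rw [Finset.mem_sdiff]
    constructor
    · rw [mem_box] at hm ⊢
      intro i
      have := hm i
      have h3 := abs_le.mp (hΛ l hl i)
      simp only [Pi.sub_apply]
      omega
    · intro h
      exact h1 (Finset.mem_image.mpr ⟨_, h, hte⟩)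
  have h2 := (Finset.card_le_card this).trans Finset.card_image_le
  rw [Finset.card_sdiff_of_subset hsub, card_box, card_box] at h2
  have e1 : (((k : ℤ) + r) - (-r)).toNat = k + 2 * r := by omega
  have e2 : ((k : ℤ) - 0).toNat = k := by omega
  rw [e1, e2] at h2
  have h4 : k ^ d ≤ (k + 2 * r) ^ d := Nat.pow_le_pow_left (by omega) d
  have h5 : ((hit (Finset.univ \ tb N p k) (tb N p k) Λ).card : ℝ) ≤
      (((k + 2 * r) ^ d - k ^ d : ℕ) : ℝ) := by exact_mod_cast h2
  rw [Nat.cast_sub h4] at h5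
  push_cast at h5
  exact h5

lemma outside (hcont : ∀ Λ, Continuous (Φ Λ)) (hsum : Summable (nrm Φ))
    (hloc : ∀ (Λ : Finset (Fin d → ℤ)) (x y : Cfg d A),
      (∀ m ∈ Λ, x m = y m) → Φ Λ x = Φ Λ y) (ε : ℝ) (hε : 0 < ε) :
    ∃ K0 : ℕ, ∀ k : ℕ, K0 ≤ k → ∀ (N : ℕ) [NeZero N] (p : Fin d → ℤ) (w w' : Tor d N → A),
      (∀ t, t ∉ tb N p k → w t = w' t) →
      |∑ t ∈ Finset.univ \ tb N p k, (potentialOfInteraction Φ (per (trans t w)) -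
        potentialOfInteraction Φ (per (trans t w')))| ≤ ε * (k : ℝ) ^ d := by
  have hS0 : 0 ≤ ∑' Λ, nrm Φ Λ := tsum_nonneg (nrm_nonneg Φ)
  set S := ∑' Λ, nrm Φ Λ with hS
  obtain ⟨r, hr⟩ := tail_small Φ hsum (ε / 4) (by positivity)
  obtain ⟨K0, hK0⟩ := count_lim d r (ε / (4 * (S + 1))) (by positivity)
  refine ⟨K0, fun k hk N _ p w w' hw => ?_⟩
  obtain ⟨hk1, hk2, hk3⟩ := hK0 k hk
  have hk1' : (2 * r : ℝ) ≤ k := by exact_mod_cast hk1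
  have hD : ((k : ℝ) + 2 * r) ^ d - (k : ℝ) ^ d ≤ ε / (4 * (S + 1)) * (k : ℝ) ^ d := by
    have : ((k : ℝ) - 2 * r) ^ d ≤ (k : ℝ) ^ d :=
      pow_le_pow_left₀ (by linarith) (by have : (0 : ℝ) ≤ r := by positivity
                                         linarith) d
    linarith
  have hD0 : 0 ≤ ((k : ℝ) + 2 * r) ^ d - (k : ℝ) ^ d := by
    have : (k : ℝ) ^ d ≤ ((k : ℝ) + 2 * r) ^ d :=
      pow_le_pow_left₀ (by positivity) (by have : (0 : ℝ) ≤ r := by positivity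
                                           linarith) d
    linarith
  set D := ((k : ℝ) + 2 * r) ^ d - (k : ℝ) ^ d with hDdef
  have h1 := pot_sum_hasSum Φ hcont hsum (Finset.univ \ tb N p k)
    (fun t => per (trans t w)) (fun t => per (trans t w'))
  have h2 := (hsum.hasSum.mul_left (2 * D)).add
    ((tl_summable Φ hsum r).hasSum.mul_left (2 * (k : ℝ) ^ d))
  have := h1.norm_le_of_bounded h2 (fun Λ => ?_)
  · rw [Real.norm_eq_abs] at this
    refine this.trans ?_
    have a1 : 2 * D * S ≤ ε / 2 * (k : ℝ) ^ d := by
      calc 2 * D * S ≤ 2 * (ε / (4 * (S + 1)) * (k : ℝ) ^ d) * (S + 1) := by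
            gcongr; linarith
        _ = ε / 2 * (k : ℝ) ^ d := by field_simp; ring
    have a2 : 2 * (k : ℝ) ^ d * ∑' Λ, tl Φ r Λ ≤ 2 * (k : ℝ) ^ d * (ε / 4) := by gcongr
    linarith
  · have hn := nrm_nonneg Φ Λ
    rw [Real.norm_eq_abs]
    by_cases hΛ : inB r Λ
    · have hc := card_ge_one Λ
      have hc0 : (0 : ℝ) < (Λ.1.card : ℝ) := by linarith
      rw [abs_div, abs_of_pos hc0]
      refine (div_le_self (abs_nonneg _) hc).trans ?_
      refine (hit_sum Φ hcont hloc _ _ w w' hw Λ).trans ?_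
      have h3 := hit_outside N p k r Λ hΛ
      simp only [tl, hΛ, if_true, mul_zero, add_zero]
      calc 2 * nrm Φ Λ * _ ≤ 2 * nrm Φ Λ * D := by gcongr
        _ = _ := by ring
    · refine (hit_div Φ hcont hloc _ _ w w' hw Λ).trans ?_
      simp only [tl, hΛ, if_false]
      have h4 : ((tb N p k).card : ℝ) ≤ (k : ℝ) ^ d := by exact_mod_cast tb_card N p k
      have h5 : 0 ≤ 2 * D * nrm Φ Λ := by positivity
      have h6 : 2 * ((tb N p k).card : ℝ) * nrm Φ Λ ≤ 2 * (k : ℝ) ^ d * nrm Φ Λ := by gcongr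
      linarith

end Inter


section Upd

/-- Update with classical decidability. -/
noncomputable def updG {I V : Type*} (ω : I → V) (i : I) (v : V) : I → V := Function.update ω i v

lemma updG_self {I V : Type*} (ω : I → V) (i : I) (v : V) : updG ω i v i = v := by
  simp [updG]

lemma updG_ne {I V : Type*} (ω : I → V) (i : I) (v : V) (j : I) (h : j ≠ i) :
    updG ω i v j = ω j := by
  simp [updG, h]

lemma sc_totalG {T I F A : Type*} [Fintype T] [Fintype I] [Fintype F] [Fintype A]
    (g : I × F → T) (hg : Function.Injective g) (S : (T → A) → ℝ) (b C δ ε κ : ℝ)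
    (a : F → A) (hb : 1 ≤ b) (hκ : 0 < κ)
    (hκ2 : ∀ (h : (F → A) → ℝ) (u v : F → A), (∀ w, |h w| ≤ C) → δ ≤ |h u - h v| →
      (1 + κ) * (∑ w, Real.exp (b * h w)) ^ 2 ≤
        (∑ w, Real.exp ((b - 1) * h w)) * (∑ w, Real.exp ((b + 1) * h w)))
    (hcross : ∀ (η : {t // t ∉ Set.range g} → A) (i : I) (u : F → A) (ω ω' : I → F → A),
      |(S (merge g η (updG ω i u)) - S (merge g η (updG ω i a))) -
        (S (merge g η (updG ω' i u)) - S (merge g η (updG ω' i a)))| ≤ ε)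
    (hC : ∀ (η : {t // t ∉ Set.range g} → A) (i : I) (u : F → A) (ω : I → F → A),
      |S (merge g η (updG ω i u)) - S (merge g η (updG ω i a))| ≤ C)
    (u v : F → A) (hδ : ∀ (η : {t // t ∉ Set.range g} → A) (i : I) (ω : I → F → A),
      δ ≤ |S (merge g η (updG ω i u)) - S (merge g η (updG ω i v))|) :
    ((1 + κ) * Real.exp (-(4 * b * ε))) ^ Fintype.card I * (∑ w, Real.exp (b * S w)) ^ 2 ≤
      (∑ w, Real.exp ((b - 1) * S w)) * (∑ w, Real.exp ((b + 1) * S w)) :=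
  sc_total g hg S b C δ ε κ a hb hκ hκ2 hcross hC u v hδ

end Upd

section Nontriv
variable {d : ℕ} {A : Type} [Fintype A] [TopologicalSpace A] [DiscreteTopology A]
  [MeasurableSpace A] [BorelSpace A]
variable (Φ : Finset (Fin d → ℤ) → Cfg d A → ℝ)

lemma tb_injOn (N k : ℕ) (hk : k ≤ N) (p : Fin d → ℤ) :
    Set.InjOn (fun m => castT N (p + m)) (box d 0 k) := by
  intro m hm m' hm' h
  have hs : ∀ m ∈ box d 0 k, m ∈ box d 0 N := by
    intro m hm
    rw [mem_box] at hm ⊢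
    intro i; have := hm i; omega
  apply castT_injOn N (hs m hm) (hs m' hm')
  simp only [castT_add] at h
  exact add_left_cancel h

lemma sum_tb (f : Cfg d A → ℝ) (N k : ℕ) (hk : k ≤ N) (p : Fin d → ℤ) (w : Tor d N → A) :
    ∑ t ∈ tb N p k, f (per (trans t w)) = boxSum f k (shift p (per w)) := by
  rw [tb, Finset.sum_image (tb_injOn N k hk p), boxSum]
  refine Finset.sum_congr rfl fun m _ => ?_
  rw [shift_per, shift_per, trans_trans, castT_add]

lemma nontriv (hcont : ∀ Λ, Continuous (Φ Λ)) (hsum : Summable (nrm Φ))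
    (hloc : ∀ (Λ : Finset (Fin d → ℤ)) (x y : Cfg d A),
      (∀ m ∈ Λ, x m = y m) → Φ Λ x = Φ Λ y)
    (ν₁ ν₂ : Measure (Cfg d A)) [IsProbabilityMeasure ν₁] [IsProbabilityMeasure ν₂]
    (h₁ : Invariant ν₁) (h₂ : Invariant ν₂) (γ : ℝ) (hγ : 0 < γ)
    (hint : γ ≤ (∫ x, potentialOfInteraction Φ x ∂ν₁) - ∫ x, potentialOfInteraction Φ x ∂ν₂) :
    ∃ k : ℕ, 1 ≤ k ∧ ∃ x y : Cfg d A, ∀ (N : ℕ) [NeZero N] (p : Fin d → ℤ)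
      (w w' : Tor d N → A), k ≤ N → (∀ t, t ∉ tb N p k → w t = w' t) →
      (∀ m ∈ box d 0 k, w (castT N (p + m)) = x m) →
      (∀ m ∈ box d 0 k, w' (castT N (p + m)) = y m) →
      γ / 4 * (k : ℝ) ^ d ≤
        SS (potentialOfInteraction Φ) w - SS (potentialOfInteraction Φ) w' := by
  have hc := cont_pot Φ hcont hsum
  obtain ⟨K1, hK1⟩ := outside Φ hcont hsum hloc (γ / 4) (by positivity)
  obtain ⟨K2, hK2⟩ := boxSum_close _ hc (UC_pot Φ hcont hsum hloc) (γ / 4) (by positivity)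
  set φ := potentialOfInteraction Φ with hφ
  set k := max (max K1 K2) 1 with hk
  have hk1 : K1 ≤ k := by omega
  have hk2 : K2 ≤ k := by omega
  refine ⟨k, by omega, ?_⟩
  obtain ⟨x, hx⟩ := exists_integral_le (μ := ν₁) (integrable_cont _ (continuous_boxSum φ hc k) ν₁)
  obtain ⟨y, hy⟩ := exists_le_integral (μ := ν₂) (integrable_cont _ (continuous_boxSum φ hc k) ν₂)
  rw [integral_boxSum _ h₁ φ hc] at hx
  rw [integral_boxSum _ h₂ φ hc] at hy
  refine ⟨x, y, fun N _ p w w' hkN hw hwx hwy => ?_⟩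
  have e1 := hK1 k hk1 N p w w' hw
  have e2 := hK2 k hk2 (shift p (per w)) x hwx
  have e3 := hK2 k hk2 (shift p (per w')) y hwy
  have e4 : SS φ w - SS φ w' = (boxSum φ k (shift p (per w)) - boxSum φ k (shift p (per w'))) +
      ∑ t ∈ Finset.univ \ tb N p k, (φ (per (trans t w)) - φ (per (trans t w'))) := by
    rw [← sum_tb φ N k hkN, ← sum_tb φ N k hkN, ← Finset.sum_sub_distrib, add_comm,
      Finset.sum_sdiff (Finset.subset_univ _), Finset.sum_sub_distrib]
    rfl
  rw [e4]
  have f1 := abs_le.mp e1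
  have f2 := abs_le.mp e2
  have f3 := abs_le.mp e3
  have hkd : (0 : ℝ) ≤ (k : ℝ) ^ d := by positivity
  have g1 := mul_le_mul_of_nonneg_left hint hkd
  linarith [f1.1, f2.1, f3.2]

/-- The box map. -/
def gB (d L M k N : ℕ) : (Fin d → Fin M) × (Fin d → Fin k) → Tor d N :=
  fun p => castT N (fun i => (L : ℤ) * (p.1 i : ℕ) + ((p.2 i : ℕ) : ℤ))

/-- The corner of a box. -/
def cor (L : ℕ) {M : ℕ} (j : Fin d → Fin M) : Fin d → ℤ := fun i => (L : ℤ) * (j i : ℕ)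

lemma gB_eq (L M k N : ℕ) (j : Fin d → Fin M) (m : Fin d → Fin k) :
    gB d L M k N (j, m) = castT N (cor L j + emb m) := rfl

lemma emb_surj (k : ℕ) (m : Fin d → ℤ) (hm : m ∈ box d 0 k) : ∃ m' : Fin d → Fin k, emb m' = m := by
  rw [mem_box] at hm
  refine ⟨fun i => ⟨(m i).toNat, by have := hm i; omega⟩, ?_⟩
  funext i; simp only [emb]; have := hm i; omega

lemma emb_mem (k : ℕ) (m : Fin d → Fin k) : emb m ∈ box d 0 k := by
  rw [mem_box]; intro i; simp [emb]

lemma gB_mem_tb (L M k N : ℕ) (j : Fin d → Fin M) (m : Fin d → Fin k) :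
    gB d L M k N (j, m) ∈ tb N (cor L j) k :=
  Finset.mem_image.mpr ⟨emb m, emb_mem k m, rfl⟩

lemma mem_tb_gB (L M k N : ℕ) (j : Fin d → Fin M) (t : Tor d N) (ht : t ∈ tb N (cor L j) k) :
    ∃ m : Fin d → Fin k, gB d L M k N (j, m) = t := by
  obtain ⟨m, hm, he⟩ := Finset.mem_image.mp ht
  obtain ⟨m', rfl⟩ := emb_surj k m hm
  exact ⟨m', he⟩

lemma merge_agree (L M k N : ℕ) (hg : Function.Injective (gB d L M k N))
    (η : {t // t ∉ Set.range (gB d L M k N)} → A) (ω : (Fin d → Fin M) → (Fin d → Fin k) → A)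
    (j : Fin d → Fin M) (u a : (Fin d → Fin k) → A) (t : Tor d N) (ht : t ∉ tb N (cor L j) k) :
    merge (gB d L M k N) η (updG ω j u) t =
      merge (gB d L M k N) η (updG ω j a) t := by
  by_cases h : t ∈ Set.range (gB d L M k N)
  · obtain ⟨⟨j', m⟩, rfl⟩ := h
    have hne : j' ≠ j := by rintro rfl; exact ht (gB_mem_tb L M k N _ m)
    rw [merge_box _ hg, merge_box _ hg, updG_ne _ _ _ _ hne, updG_ne _ _ _ _ hne]
  · rw [merge_off _ _ _ _ h, merge_off _ _ _ _ h]

lemma sep (L M k N r : ℕ) (hL : k + 2 * r + 1 ≤ L) (hN : N = M * L)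
    (j j' : Fin d → Fin M) (m m' : Fin d → Fin k) (l l' : Fin d → ℤ)
    (hl : ∀ i, |l i| ≤ (r : ℤ)) (hl' : ∀ i, |l' i| ≤ (r : ℤ)) (t : Tor d N)
    (h : t + castT N l = gB d L M k N (j, m)) (h' : t + castT N l' = gB d L M k N (j', m')) :
    j = j' := by
  funext i
  have e := congrFun h i
  have e' := congrFun h' i
  simp only [gB, castT, Pi.add_apply] at e e'
  have h0 : (((L : ℤ) * (j i : ℕ) + ((m i : ℕ) : ℤ) - l i : ℤ) : ZMod N) =
      (((L : ℤ) * (j' i : ℕ) + ((m' i : ℕ) : ℤ) - l' i : ℤ) : ZMod N) := by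
    rw [Int.cast_sub, Int.cast_sub, ← e, ← e']
    ring
  rw [ZMod.intCast_eq_intCast_iff_dvd_sub] at h0
  obtain ⟨c, hc⟩ := h0
  have hN' : (N : ℤ) = M * L := by exact_mod_cast hN
  rw [hN'] at hc
  have h1 := abs_le.mp (hl i)
  have h2 := abs_le.mp (hl' i)
  have h3 := (m i).2
  have h4 := (m' i).2
  have hLp : (0 : ℤ) < L := by omega
  have hq : ((m' i : ℕ) : ℤ) - l' i - ((m i : ℕ) - l i) = L * (M * c - (j' i : ℕ) + (j i : ℕ)) := by
    linarith
  have hz : (M * c - ((j' i : ℕ) : ℤ) + ((j i : ℕ) : ℤ)) = 0 := by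
    have hlt : |(L : ℤ) * (M * c - (j' i : ℕ) + (j i : ℕ))| < L := by
      rw [← hq, abs_lt]; omega
    rw [abs_mul, abs_of_pos hLp] at hlt
    by_contra hne
    have := Int.one_le_abs hne
    nlinarith
  have h5 := (j i).2
  have h6 := (j' i).2
  have hMp : (0 : ℤ) < M := by omega
  have hc0 : c = 0 := by
    have hlt : |(M : ℤ) * c| < M := by
      rw [abs_lt]; omega
    rw [abs_mul, abs_of_pos hMp] at hlt
    by_contra hne
    have := Int.one_le_abs hne
    nlinarith
  rw [hc0] at hz
  apply Fin.ext
  omega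

lemma cross (hcont : ∀ Λ, Continuous (Φ Λ)) (hsum : Summable (nrm Φ))
    (hloc : ∀ (Λ : Finset (Fin d → ℤ)) (x y : Cfg d A),
      (∀ m ∈ Λ, x m = y m) → Φ Λ x = Φ Λ y)
    (L M k N r : ℕ) [NeZero N] (hL : k + 2 * r + 1 ≤ L) (hN : N = M * L)
    (hg : Function.Injective (gB d L M k N))
    (η : {t // t ∉ Set.range (gB d L M k N)} → A) (j : Fin d → Fin M)
    (u a : (Fin d → Fin k) → A) (ω ω' : (Fin d → Fin M) → (Fin d → Fin k) → A) :
    |(SS (potentialOfInteraction Φ) (merge (gB d L M k N) η (updG ω j u)) -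
      SS (potentialOfInteraction Φ) (merge (gB d L M k N) η (updG ω j a))) -
     (SS (potentialOfInteraction Φ) (merge (gB d L M k N) η (updG ω' j u)) -
      SS (potentialOfInteraction Φ) (merge (gB d L M k N) η (updG ω' j a)))| ≤
      4 * (k : ℝ) ^ d * ∑' Λ, tl Φ r Λ := by
  have h1 := pot_sum_hasSum Φ hcont hsum (Finset.univ : Finset (Tor d N))
    (fun t => per (trans t (merge (gB d L M k N) η (updG ω j u))))
    (fun t => per (trans t (merge (gB d L M k N) η (updG ω j a))))
  have h2 := pot_sum_hasSum Φ hcont hsum (Finset.univ : Finset (Tor d N))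
    (fun t => per (trans t (merge (gB d L M k N) η (updG ω' j u))))
    (fun t => per (trans t (merge (gB d L M k N) η (updG ω' j a))))
  have h3 := (tl_summable Φ hsum r).hasSum.mul_left (4 * (k : ℝ) ^ d)
  have := (h1.sub h2).norm_le_of_bounded h3 (fun Λ => ?_)
  · rwa [Finset.sum_sub_distrib, Finset.sum_sub_distrib] at this
  by_cases hΛ : inB r Λ
  · have hz : ∀ t : Tor d N,
        Φ Λ.1 (per (trans t (merge (gB d L M k N) η (updG ω j u)))) -
          Φ Λ.1 (per (trans t (merge (gB d L M k N) η (updG ω j a)))) =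
        Φ Λ.1 (per (trans t (merge (gB d L M k N) η (updG ω' j u)))) -
          Φ Λ.1 (per (trans t (merge (gB d L M k N) η (updG ω' j a)))) := by
      intro t
      by_cases hh : ∃ l ∈ Λ.1, t + castT N l ∈ tb N (cor L j) k
      · obtain ⟨l, hl, hb⟩ := hh
        obtain ⟨m, hm⟩ := mem_tb_gB L M k N j _ hb
        have key : ∀ v : (Fin d → Fin k) → A,
            Φ Λ.1 (per (trans t (merge (gB d L M k N) η (updG ω j v)))) =
            Φ Λ.1 (per (trans t (merge (gB d L M k N) η (updG ω' j v)))) := by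
          intro v
          apply hloc
          intro l' hl'
          change merge (gB d L M k N) η (updG ω j v) (t + castT N l') =
            merge (gB d L M k N) η (updG ω' j v) (t + castT N l')
          by_cases hr : t + castT N l' ∈ Set.range (gB d L M k N)
          · obtain ⟨⟨j', m'⟩, h'⟩ := hr
            have hjj : j = j' := sep L M k N r hL hN j j' m m' l l' (hΛ l hl) (hΛ l' hl') t
              hm.symm h'.symm
            subst hjj
            rw [← h', merge_box _ hg, merge_box _ hg, updG_self, updG_self]
          · rw [merge_off _ _ _ _ hr, merge_off _ _ _ _ hr]
        rw [key u, key a]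
      · push Not at hh
        have key : ∀ o : (Fin d → Fin M) → (Fin d → Fin k) → A,
            Φ Λ.1 (per (trans t (merge (gB d L M k N) η (updG o j u)))) =
            Φ Λ.1 (per (trans t (merge (gB d L M k N) η (updG o j a)))) := by
          intro o
          apply hloc
          intro l hl
          exact merge_agree L M k N hg η o j u a _ (hh l hl)
        rw [key ω, key ω', sub_self, sub_self]
    rw [Finset.sum_congr rfl fun t _ => hz t]
    simp [tl, hΛ]
  · simp only [tl, hΛ, if_false]
    have a1 := hit_div Φ hcont hloc Finset.univ (tb N (cor L j) k) _ _
      (fun t ht => merge_agree L M k N hg η ω j u a t ht) Λ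
    have a2 := hit_div Φ hcont hloc Finset.univ (tb N (cor L j) k) _ _
      (fun t ht => merge_agree L M k N hg η ω' j u a t ht) Λ
    have hn := nrm_nonneg Φ Λ
    have h4 : ((tb N (cor L j) k).card : ℝ) ≤ (k : ℝ) ^ d := by exact_mod_cast tb_card N _ k
    have h6 : 2 * ((tb N (cor L j) k).card : ℝ) * nrm Φ Λ ≤ 2 * (k : ℝ) ^ d * nrm Φ Λ := by gcongr
    refine (norm_sub_le _ _).trans ?_
    simp only [Real.norm_eq_abs]
    linarith

lemma SS_mul {N : ℕ} [NeZero N] (f : Cfg d A → ℝ) (β : ℝ) (w : Tor d N → A) :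
    SS (fun x => β * f x) w = β * SS f w := by
  simp [SS, Finset.mul_sum]

lemma log_step (n : ℕ) (Z0 Z1 Z2 κ e : ℝ) (h0 : 0 < Z0) (h1 : 0 < Z1) (h2 : 0 < Z2) (hκ : 0 < κ)
    (h : ((1 + κ) * Real.exp (-e)) ^ n * Z0 ^ 2 ≤ Z1 * Z2) :
    n * (Real.log (1 + κ) - e) + 2 * Real.log Z0 ≤ Real.log Z1 + Real.log Z2 := by
  have hk : 0 < 1 + κ := by linarith
  have := Real.log_le_log (by positivity) h
  rw [Real.log_mul (by positivity) (by positivity), Real.log_mul h1.ne' h2.ne',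
    Real.log_pow, Real.log_pow, Real.log_mul (by positivity) (by positivity), Real.log_exp] at this
  push_cast at this
  linarith

lemma two_pointF (F A : Type*) [Fintype F] [Fintype A] (b C δ : ℝ) (hb : 1 ≤ b) (hδ : 0 < δ) :
    ∃ κ : ℝ, 0 < κ ∧ ∀ (h : (F → A) → ℝ) (u v : F → A), (∀ w, |h w| ≤ C) → δ ≤ |h u - h v| →
      (1 + κ) * (∑ w, Real.exp (b * h w)) ^ 2 ≤
        (∑ w, Real.exp ((b - 1) * h w)) * (∑ w, Real.exp ((b + 1) * h w)) :=
  two_point (F → A) b C δ hb hδ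

lemma strict [Nonempty A] (hcont : ∀ Λ, Continuous (Φ Λ)) (hsum : Summable (nrm Φ))
    (hloc : ∀ (Λ : Finset (Fin d → ℤ)) (x y : Cfg d A),
      (∀ m ∈ Λ, x m = y m) → Φ Λ x = Φ Λ y)
    (ν₁ ν₂ : Measure (Cfg d A)) [IsProbabilityMeasure ν₁] [IsProbabilityMeasure ν₂]
    (h₁ : Invariant ν₁) (h₂ : Invariant ν₂)
    (hint : (∫ x, potentialOfInteraction Φ x ∂ν₂) < ∫ x, potentialOfInteraction Φ x ∂ν₁)
    (b : ℝ) (hb : 1 ≤ b) :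
    2 * PL (fun x => b * potentialOfInteraction Φ x) <
      PL (fun x => (b - 1) * potentialOfInteraction Φ x) +
      PL (fun x => (b + 1) * potentialOfInteraction Φ x) := by
  have hc := cont_pot Φ hcont hsum
  obtain ⟨k, hk, x, y, hxy⟩ := nontriv Φ hcont hsum hloc ν₁ ν₂ h₁ h₂ _ (sub_pos.mpr hint) le_rfl
  set γ := (∫ x, potentialOfInteraction Φ x ∂ν₁) - ∫ x, potentialOfInteraction Φ x ∂ν₂ with hγ
  have hγ0 : 0 < γ := sub_pos.mpr hint
  set φ := potentialOfInteraction Φ with hφ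
  have hkd : (0 : ℝ) < (k : ℝ) ^ d := by positivity
  set δ := γ / 4 * (k : ℝ) ^ d with hδ
  have hδ0 : 0 < δ := by positivity
  obtain ⟨C, hC⟩ : ∃ C, C = 2 * (k : ℝ) ^ d * ∑' Λ, nrm Φ Λ := ⟨_, rfl⟩
  obtain ⟨κ, hκ, hκ2⟩ := two_pointF (Fin d → Fin k) A b C δ hb hδ0
  have hlog : 0 < Real.log (1 + κ) := Real.log_pos (by linarith)
  set ε := Real.log (1 + κ) / (8 * b) with hε
  have hε0 : 0 < ε := by positivity
  obtain ⟨r, hr⟩ := tail_small Φ hsum (ε / (4 * (k : ℝ) ^ d)) (by positivity)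
  obtain ⟨L, hLd⟩ : ∃ L, L = k + 2 * r + 1 := ⟨_, rfl⟩
  have hL0 : 0 < L := by omega
  set c := Real.log (1 + κ) / 2 / (L : ℝ) ^ d with hcd
  have hc0 : 0 < c := by positivity
  have main : ∀ (N : ℕ) [NeZero N], L ∣ N → 2 * PN N (fun x => b * φ x) + c ≤
      PN N (fun x => (b - 1) * φ x) + PN N (fun x => (b + 1) * φ x) := by
    intro N _ hLN
    obtain ⟨M, hM⟩ := hLN
    have hN : N = M * L := by rw [hM, mul_comm]
    have hMpos : 0 < M := by
      rcases Nat.eq_zero_or_pos M with h | h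
      · exact absurd (by rw [hN, h, zero_mul]) (NeZero.ne N)
      · exact h
    have hkN : k ≤ N := by nlinarith
    have hg : Function.Injective (gB d L M k N) := box_inj L M k N (by omega) hN
    have hupd : ∀ (η : {t // t ∉ Set.range (gB d L M k N)} → A) (j : Fin d → Fin M)
        (ω : (Fin d → Fin M) → (Fin d → Fin k) → A) (z : Cfg d A), ∀ m ∈ box d 0 k,
        merge (gB d L M k N) η (updG ω j (resE k z)) (castT N (cor L j + m)) = z m := by
      intro η j ω z m hm
      obtain ⟨m', rfl⟩ := emb_surj k m hm
      rw [← gB_eq, merge_box _ hg, updG_self]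
      rfl
    have hk1 : ∀ (η : {t // t ∉ Set.range (gB d L M k N)} → A) (i : Fin d → Fin M)
        (u : (Fin d → Fin k) → A) (ω ω' : (Fin d → Fin M) → (Fin d → Fin k) → A),
        |(SS φ (merge (gB d L M k N) η (updG ω i u)) -
          SS φ (merge (gB d L M k N) η (updG ω i (fun _ => Classical.arbitrary A)))) -
        (SS φ (merge (gB d L M k N) η (updG ω' i u)) -
          SS φ (merge (gB d L M k N) η (updG ω' i (fun _ => Classical.arbitrary A))))|
          ≤ ε := by
      intro η j u ω ω'
      refine (cross Φ hcont hsum hloc L M k N r hLd.ge hN hg η j u _ ω ω').trans ?_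
      calc 4 * (k : ℝ) ^ d * ∑' Λ, tl Φ r Λ ≤ 4 * (k : ℝ) ^ d * (ε / (4 * (k : ℝ) ^ d)) := by gcongr
        _ = ε := by field_simp
    have hk2 : ∀ (η : {t // t ∉ Set.range (gB d L M k N)} → A) (i : Fin d → Fin M)
        (u : (Fin d → Fin k) → A) (ω : (Fin d → Fin M) → (Fin d → Fin k) → A),
        |SS φ (merge (gB d L M k N) η (updG ω i u)) -
          SS φ (merge (gB d L M k N) η (updG ω i (fun _ => Classical.arbitrary A)))|
          ≤ C := by
      intro η j u ω
      refine (SS_diff Φ hcont hsum hloc (tb N (cor L j) k) _ _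
        (fun t ht => merge_agree L M k N hg η ω j u _ t ht)).trans ?_
      have h4 : ((tb N (cor L j) k).card : ℝ) ≤ (k : ℝ) ^ d := by exact_mod_cast tb_card N _ k
      have : 0 ≤ ∑' Λ, nrm Φ Λ := tsum_nonneg (nrm_nonneg Φ)
      rw [hC]; gcongr
    have hk3 : ∀ (η : {t // t ∉ Set.range (gB d L M k N)} → A) (i : Fin d → Fin M)
        (ω : (Fin d → Fin M) → (Fin d → Fin k) → A),
        δ ≤ |SS φ (merge (gB d L M k N) η (updG ω i (resE k x))) -
          SS φ (merge (gB d L M k N) η (updG ω i (resE k y)))| := by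
      intro η j ω
      exact (hxy N (cor L j) _ _ hkN
        (fun t ht => merge_agree L M k N hg η ω j _ _ t ht) (hupd η j ω x) (hupd η j ω y)).trans
          (le_abs_self _)
    have hsc := sc_totalG (gB d L M k N) hg (SS φ) b C δ ε κ (fun _ => Classical.arbitrary A) hb hκ
      hκ2 hk1 hk2 (resE k x) (resE k y) hk3
    clear hk1 hk2 hk3 hupd hxy hκ2
    have hZ : ∀ β : ℝ, 0 < ∑ w : Tor d N → A, Real.exp (β * SS φ w) := fun β =>
      Finset.sum_pos (fun _ _ => Real.exp_pos _) Finset.univ_nonempty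
    have hsc2 : ((1 + κ) * Real.exp (-(4 * b * ε))) ^ (M ^ d) *
        (∑ w : Tor d N → A, Real.exp (b * SS φ w)) ^ 2 ≤
        (∑ w : Tor d N → A, Real.exp ((b - 1) * SS φ w)) *
          (∑ w : Tor d N → A, Real.exp ((b + 1) * SS φ w)) := by
      convert hsc
      simp
    have hlg := log_step _ _ _ _ κ _ (hZ b) (hZ (b - 1)) (hZ (b + 1)) hκ hsc2
    have he : Real.log (1 + κ) - (4 * b * ε) = Real.log (1 + κ) / 2 := by
      rw [hε]; field_simp; ring
    rw [he] at hlg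
    push_cast at hlg
    unfold PN
    simp only [SS_mul]
    have hNd : (0 : ℝ) < (N : ℝ) ^ d := by have := NeZero.pos N; positivity
    have hcM : c = ((N : ℝ) ^ d)⁻¹ * ((M : ℝ) ^ d * (Real.log (1 + κ) / 2)) := by
      rw [hcd, hN]; push_cast; rw [mul_pow]; field_simp
    rw [hcM, ← mul_add]
    have := mul_le_mul_of_nonneg_left hlg (inv_pos.mpr hNd).le
    push_cast at this
    linarith
  have t0 := PL_tendsto (fun x => b * φ x) (hc.const_mul b)
  have t1 := PL_tendsto (fun x => (b - 1) * φ x) (hc.const_mul (b - 1))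
  have t2 := PL_tendsto (fun x => (b + 1) * φ x) (hc.const_mul (b + 1))
  have := le_of_tendsto_of_tendsto ((t0.const_mul 2).add_const c) (t1.add t2)
    ((hyper_ge L).mono fun K hK => main _ (Nat.dvd_factorial hL0 hK))
  linarith

end Nontriv


section Final
variable {d : ℕ} {A : Type} [Fintype A] [TopologicalSpace A] [DiscreteTopology A]
  [MeasurableSpace A] [BorelSpace A]

lemma pressure_eq [Nonempty A] (φ : Cfg d A → ℝ) (hc : Continuous φ) (hu : UC φ) (β : ℝ) :
    IsGreatest { r | ∃ μ : Measure (Cfg d A), IsProbabilityMeasure μ ∧ Invariant μ ∧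
      r = entropy μ + β * ∫ x, φ x ∂μ } (PL (fun x => β * φ x)) := by
  have hub : ∀ r ∈ { r | ∃ μ : Measure (Cfg d A), IsProbabilityMeasure μ ∧ Invariant μ ∧
      r = entropy μ + β * ∫ x, φ x ∂μ }, r ≤ PL (fun x => β * φ x) := by
    rintro r ⟨μ, hp, hi, rfl⟩
    have := easy_side (fun x => β * φ x) (hc.const_mul β) (UC_mul hu β) μ hi
    rwa [integral_const_mul] at this
  refine ⟨?_, hub⟩
  obtain ⟨μ, hp, hi, hle⟩ := hard_side (fun x => β * φ x) (hc.const_mul β)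
  rw [integral_const_mul] at hle
  exact ⟨μ, hp, hi, le_antisymm hle (hub _ ⟨μ, hp, hi, rfl⟩)⟩

lemma no_freeze [Nonempty A] (Φ : Finset (Fin d → ℤ) → Cfg d A → ℝ)
    (hcont : ∀ Λ, Continuous (Φ Λ)) (hsum : Summable (nrm Φ))
    (hloc : ∀ (Λ : Finset (Fin d → ℤ)) (x y : Cfg d A),
      (∀ m ∈ Λ, x m = y m) → Φ Λ x = Φ Λ y) (βc : ℝ)
    (hF : FreezingPT (potentialOfInteraction Φ) βc) : False := by
  have hc := cont_pot Φ hcont hsum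
  have hu := UC_pot Φ hcont hsum hloc
  have hg := pressure_eq _ hc hu
  have hp : ∀ β, pressure (potentialOfInteraction Φ) β =
      PL (fun x => β * potentialOfInteraction Φ x) := fun β => (hg β).csSup_eq
  by_cases hcase : ∃ ν₁ ν₂ : Measure (Cfg d A), IsProbabilityMeasure ν₁ ∧ IsProbabilityMeasure ν₂ ∧
      Invariant ν₁ ∧ Invariant ν₂ ∧
      (∫ x, potentialOfInteraction Φ x ∂ν₂) < ∫ x, potentialOfInteraction Φ x ∂ν₁
  · obtain ⟨ν₁, ν₂, hp1, hp2, hi1, hi2, hlt⟩ := hcase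
    set b := |βc| + 2 with hb
    have hbc : βc ≤ |βc| := le_abs_self _
    have hb0 : 0 ≤ |βc| := abs_nonneg _
    have hs := strict Φ hcont hsum hloc ν₁ ν₂ hi1 hi2 hlt b (by linarith)
    obtain ⟨μ, hpμ, hiμ, hμ⟩ := (hg b).1
    have hmem : μ ∈ ES (potentialOfInteraction Φ) b := ⟨hpμ, hiμ, by rw [hp, hμ]⟩
    have h1 : μ ∈ ES (potentialOfInteraction Φ) (b - 1) := by
      rw [hF.1 (b - 1) b (by linarith) (by linarith)]; exact hmem
    have h2 : μ ∈ ES (potentialOfInteraction Φ) (b + 1) := by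
      rw [hF.1 (b + 1) b (by linarith) (by linarith)]; exact hmem
    have e1 := h1.2.2
    have e2 := h2.2.2
    rw [hp] at e1 e2
    rw [← e1, ← e2, hμ] at hs
    linarith
  · push Not at hcase
    have heq : ∀ ν₁ ν₂ : Measure (Cfg d A), IsProbabilityMeasure ν₁ → IsProbabilityMeasure ν₂ →
        Invariant ν₁ → Invariant ν₂ →
        (∫ x, potentialOfInteraction Φ x ∂ν₂) = ∫ x, potentialOfInteraction Φ x ∂ν₁ :=
      fun ν₁ ν₂ a1 a2 a3 a4 => le_antisymm (hcase ν₂ ν₁ a2 a1 a4 a3) (hcase ν₁ ν₂ a1 a2 a3 a4)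
    have hsub : ∀ β β' : ℝ, ES (potentialOfInteraction Φ) β ⊆ ES (potentialOfInteraction Φ) β' := by
      rintro β β' μ ⟨hpμ, hiμ, hμ⟩
      refine ⟨hpμ, hiμ, ?_⟩
      rw [hp] at hμ ⊢
      obtain ⟨ν, hpν, hiν, hν⟩ := (hg β').1
      have h1 := (hg β').2 ⟨μ, hpμ, hiμ, rfl⟩
      have h2 := (hg β).2 ⟨ν, hpν, hiν, rfl⟩
      have h3 := heq μ ν hpμ hpν hiμ hiν
      rw [h3] at h2 hν
      linarith
    exact hF.2 (βc - 1) (βc + 1) (by linarith) (by linarith)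
      (Set.Subset.antisymm (hsub _ _) (hsub _ _))

end Final

/-- **Theorem B'.** Let `Φ` be a shift-invariant interaction (each `Φ_Λ`
continuous and depending only on coordinates in `Λ`, with `Φ_{Λ+n}(x) = Φ_Λ(σ^n x)`), which
is absolutely summable: `Σ_{Λ ∋ 0} ‖Φ_Λ‖_∞ < ∞`. Then `φ = Σ_{Λ ∋ 0} Φ_Λ / |Λ|` is continuous
and has no freezing phase transition. -/
theorem statement2 (d : ℕ) (hd : 1 ≤ d) (A : Type) [Fintype A] [Nonempty A]
    [TopologicalSpace A] [DiscreteTopology A] [MeasurableSpace A] [BorelSpace A]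
    (Φ : Finset (Fin d → ℤ) → Cfg d A → ℝ)
    (hcont : ∀ Λ, Continuous (Φ Λ))
    (hloc : ∀ (Λ : Finset (Fin d → ℤ)) (x y : Cfg d A),
      (∀ m ∈ Λ, x m = y m) → Φ Λ x = Φ Λ y)
    (hcov : ∀ (Λ : Finset (Fin d → ℤ)) (n : Fin d → ℤ) (x : Cfg d A),
      Φ (Λ.image (fun k => k + n)) x = Φ Λ (shift n x))
    (hsum : Summable fun Λ : {Λ : Finset (Fin d → ℤ) // (0 : Fin d → ℤ) ∈ Λ} =>
      ⨆ x : Cfg d A, |Φ Λ.1 x|) :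
    Continuous (potentialOfInteraction Φ) ∧
      ¬ ∃ βc : ℝ, FreezingPT (potentialOfInteraction Φ) βc := by
  refine ⟨cont_pot Φ hcont hsum, ?_⟩
  rintro ⟨βc, hF⟩
  exact no_freeze Φ hcont hsum hloc βc hF

end Freezing
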